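/- arXiv:1702.00245 — 3 statements merged into one kernel-verified Lean document; each statement's English description precedes it below -/
import Mathlib

section
/- Every finite non-abelian group G has at least two distinct minimal centralizers; that is, there exist non-central elements x, y ∈ G such that C_G(x) and C_G(y) are minimal centralizers and C_G(x) ≠ C_G(y). -/
open Subgroup

/-- The centraliser of `x` is a minimal centraliser: any non-central element
centraliser contained in it is equal to it. -/
def IsMinCentralizer {G : Type*} [Group G] (x : G) : Prop :=
  ∀ y : G, y ∉ center G →
    centralizer ({y} : Set G) ≤ centralizer ({x} : Set G) →
    centralizer ({y} : Set G) = centralizer ({x} : Set G)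

theorem exists_min_below {G : Type*} [Group G] [Finite G] (g : G) (hg : g ∉ center G) :
    ∃ y : G, y ∉ center G ∧ IsMinCentralizer y ∧
      centralizer ({y} : Set G) ≤ centralizer ({g} : Set G) := by
  let S : Set (Subgroup G) :=
    {H | ∃ y : G, y ∉ center G ∧ centralizer ({y} : Set G) = H}
  have hS : S.Finite := Set.toFinite S
  obtain ⟨H, hle, hmin⟩ := hS.exists_le_minimal (a := centralizer ({g} : Set G)) ⟨g, hg, rfl⟩
  obtain ⟨y, hy, rfl⟩ := hmin.prop
  exact ⟨y, hy, fun z hz hzy => le_antisymm hzy (hmin.le_of_le ⟨z, hz, rfl⟩ hzy), hle⟩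

theorem exists_two_minimal_centralizers (G : Type*) [Group G] [Finite G]
    (hG : ¬ ∀ a b : G, a * b = b * a) :
    ∃ x y : G, x ∉ center G ∧ y ∉ center G ∧ IsMinCentralizer x ∧ IsMinCentralizer y ∧
      centralizer ({x} : Set G) ≠ centralizer ({y} : Set G) := by
  by_contra hcon
  push Not at hcon hG
  obtain ⟨a, b, hab⟩ := hG
  have ha : a ∉ center G := fun h => hab (mem_center_iff.1 h b).symm
  obtain ⟨x, hx, hxm, -⟩ := exists_min_below a ha
  apply hx
  rw [mem_center_iff]
  intro g
  by_cases hg : g ∈ center G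
  · exact (mem_center_iff.1 hg x).symm
  · obtain ⟨y, hy, hym, hle⟩ := exists_min_below g hg
    have h1 : x ∈ centralizer ({x} : Set G) := by
      rw [mem_centralizer_singleton_iff]
    rw [hcon x y hx hy hxm hym] at h1
    have h2 := mem_centralizer_singleton_iff.1 (hle h1)
    first
      | exact h2
      | exact h2.symm
end

section
/- Let G be a finite group, p a prime and n ≥ 1 with p^n > 3, and suppose the quotient G/Z(G) is isomorphic to PSL₂(𝔽_{p^n}) or to PGL₂(𝔽_{p^n}), where 𝔽_{p^n} is the finite field with p^n elements. Then G is a CA_min-group. -/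
open Subgroup

/-- `G` is a `CA_min`-group: any two distinct minimal non-central element
centralisers intersect in the centre. -/
def IsCAminGroup (G : Type*) [Group G] : Prop :=
  ∀ x y : G, x ∉ center G → y ∉ center G → IsMinCentralizer x → IsMinCentralizer y →
    centralizer ({x} : Set G) ≠ centralizer ({y} : Set G) →
    centralizer ({x} : Set G) ⊓ centralizer ({y} : Set G) = center G

/-- The projective special linear group of degree 2 over `F`. -/
abbrev PSL2 (F : Type*) [Field F] :=
  Matrix.SpecialLinearGroup (Fin 2) F ⧸ center (Matrix.SpecialLinearGroup (Fin 2) F)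

/-- The projective general linear group of degree 2 over `F`. -/
abbrev PGL2 (F : Type*) [Field F] :=
  Matrix.GeneralLinearGroup (Fin 2) F ⧸ center (Matrix.GeneralLinearGroup (Fin 2) F)


lemma exists_ne_of_monic {F : Type*} [Field F] [Fintype F] (P : Polynomial F) (hP : P.Monic)
    (h : P.natDegree < Nat.card F) : ∃ a, P.eval a ≠ 0 := by
  apply Polynomial.exists_eval_ne_zero_of_natDegree_lt_card P hP.ne_zero
  rw [Nat.card_eq_fintype_card] at h
  rw [Cardinal.mk_fintype]
  exact_mod_cast h

lemma char_cast {F : Type*} [Field F] [Fintype F] {p n : ℕ} (hF : Nat.card F = p ^ n) :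
    (p : F) = 0 := by
  have h : ((Nat.card F : ℕ) : F) = 0 := by
    rw [Nat.card_eq_fintype_card]; exact Nat.cast_card_eq_zero F
  rw [hF] at h
  push_cast at h
  exact eq_zero_of_pow_eq_zero h

lemma two_ne {F : Type*} [Field F] [Fintype F] {p n : ℕ} (hp : p.Prime) (hp2 : p ≠ 2)
    (hF : Nat.card F = p ^ n) : (2 : F) ≠ 0 := by
  intro h
  obtain ⟨k, hk⟩ := hp.odd_of_ne_two hp2
  have := char_cast hF
  rw [hk] at this
  push_cast at this
  rw [h] at this
  simp at this

/-- Alternating forms invariant under squares: orthogonality is transitive. -/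
lemma form_trans {F M : Type*} [Field F] [Fintype F] [AddCommGroup M]
    {p n : ℕ} (hp : p.Prime) (hF : Nat.card F = p ^ n)
    (B : F →+ F →+ M) (halt : ∀ x, B x x = 0)
    (hinv : ∀ s : F, s ≠ 0 → ∀ x y, B (s ^ 2 * x) (s ^ 2 * y) = B x y)
    (x z w : F) (hz : z ≠ 0) (hxz : B x z = 0) (hzw : B z w = 0) : B x w = 0 := by
  classical
  have hadj : ∀ s : F, s ≠ 0 → ∀ x y, B x ((s⁻¹) ^ 2 * y) = B (s ^ 2 * x) y := by
    intro s hs x y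
    have := hinv s⁻¹ (inv_ne_zero hs) (s ^ 2 * x) y
    rw [← this]
    congr 2
    field_simp
  have h0 : ∀ c : F, c ≠ 0 → (∀ x y, B x (c * y) = 0) → B x w = 0 := by
    intro c hc h
    have := h x (c⁻¹ * w)
    rwa [mul_inv_cancel_left₀ hc] at this
  by_cases hn : n ≤ 2
  · by_cases hx : x ∈ AddSubgroup.zmultiples z
    · obtain ⟨k, rfl⟩ := AddSubgroup.mem_zmultiples_iff.1 hx
      rw [map_zsmul, AddMonoidHom.zsmul_apply, hzw, smul_zero]
    · have hle : AddSubgroup.zmultiples z ≤ (B x).ker :=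
        AddSubgroup.zmultiples_le.2 (by simpa [AddMonoidHom.mem_ker] using hxz)
      have hxk : x ∈ (B x).ker := by simpa [AddMonoidHom.mem_ker] using halt x
      have hd1 := AddSubgroup.card_dvd_of_le hle
      have hd2 := AddSubgroup.card_addSubgroup_dvd_card (B x).ker
      have hne : Nat.card (AddSubgroup.zmultiples z) ≠ Nat.card (B x).ker := by
        intro h
        have := AddSubgroup.eq_of_le_of_card_ge hle h.ge
        exact hx (this ▸ hxk)
      have hz1 : Nat.card (AddSubgroup.zmultiples z) ≠ 1 := by
        intro h
        rw [AddSubgroup.card_eq_one] at h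
        exact hz (AddSubgroup.zmultiples_eq_bot.1 h)
      have htop : (B x).ker = ⊤ := by
        apply AddSubgroup.eq_top_of_card_eq
        rw [hF] at hd2 ⊢
        obtain ⟨k, hk, hk'⟩ := (Nat.dvd_prime_pow hp).1 hd2
        rw [hk'] at hd1 hne ⊢
        obtain ⟨l, hl, hl'⟩ := (Nat.dvd_prime_pow hp).1 hd1
        rw [hl'] at hne hz1
        have : l ≠ 0 := by rintro rfl; simp at hz1
        have : l ≠ k := by rintro rfl; simp at hne
        congr 1
        omega
      have : w ∈ (B x).ker := htop ▸ AddSubgroup.mem_top w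
      simpa [AddMonoidHom.mem_ker] using this
  · push Not at hn
    by_cases hp2 : p = 2
    · subst hp2
      have h2 : (2 : F) = 0 := by exact_mod_cast char_cast hF
      have hcard : 8 ≤ Nat.card F := by
        rw [hF]; exact (show 8 = 2 ^ 3 by norm_num) ▸ Nat.pow_le_pow_right (by norm_num) hn
      obtain ⟨a, ha⟩ := exists_ne_of_monic (F := F)
        (Polynomial.X * (Polynomial.X + 1) * (Polynomial.X ^ 2 + Polynomial.X + 1))
        (by monicity!) (lt_of_le_of_lt (by compute_degree) (show 4 < _ by omega))
      simp only [Polynomial.eval_mul, Polynomial.eval_add, Polynomial.eval_pow, Polynomial.eval_X,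
        Polynomial.eval_one] at ha
      have ha0 : a ≠ 0 := by rintro rfl; simp at ha
      have ha1 : a + 1 ≠ 0 := by intro h; simp [h] at ha
      have ha2 : a ^ 2 + a + 1 ≠ 0 := by intro h; simp [h] at ha
      apply h0 (((a + 1)⁻¹) ^ 2 - (a⁻¹) ^ 2 - 1)
      · have : ((a + 1)⁻¹) ^ 2 - (a⁻¹) ^ 2 - 1 =
            (a ^ 2 + a + 1) ^ 2 * ((a + 1)⁻¹) ^ 2 * (a⁻¹) ^ 2 := by
          field_simp
          linear_combination (-(a^4 +2 * a^3+ 2* a^2 + 2 * a + 1)) * h2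
        rw [this]
        positivity
      · intro u v
        have e1 := hadj (a + 1) ha1 u v
        have e2 := hadj a ha0 u v
        rw [sub_mul, sub_mul, one_mul, map_sub, map_sub, e1, e2]
        rw [show (a + 1) ^ 2 * u = a ^ 2 * u + u by linear_combination (a * u) * h2, map_add,
          AddMonoidHom.add_apply]
        abel
    · have h2 := two_ne hp hp2 hF
      have hp3 : 3 ≤ p := by have := hp.two_le; omega
      have hcard : 27 ≤ Nat.card F := by
        rw [hF]
        calc 27 = 3 ^ 3 := by norm_num
          _ ≤ p ^ 3 := Nat.pow_le_pow_left hp3 3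
          _ ≤ p ^ n := Nat.pow_le_pow_right (by omega) hn
      obtain ⟨a, ha⟩ := exists_ne_of_monic (F := F)
        (Polynomial.X * (Polynomial.X + 1) * (Polynomial.X - 1) * (Polynomial.X ^ 2 + 1) *
          (Polynomial.X ^ 4 - 3 * Polynomial.X ^ 2 + 1))
        (by monicity!) (lt_of_le_of_lt (by compute_degree) (show 9 < _ by omega))
      simp only [Polynomial.eval_mul, Polynomial.eval_add, Polynomial.eval_pow, Polynomial.eval_X,
        Polynomial.eval_one, Polynomial.eval_sub, Polynomial.eval_ofNat] at ha
      have ha0 : a ≠ 0 := by rintro rfl; simp at ha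
      have ha1 : a + 1 ≠ 0 := by intro h; simp [h] at ha
      have ha2 : a - 1 ≠ 0 := by intro h; simp [h] at ha
      have ha3 : a ^ 2 + 1 ≠ 0 := by intro h; simp [h] at ha
      have ha4 : a ^ 4 - 3 * a ^ 2 + 1 ≠ 0 := by intro h; simp [h] at ha
      apply h0 (((a + 1)⁻¹) ^ 2 + ((a - 1)⁻¹) ^ 2 - (a⁻¹) ^ 2 - (a⁻¹) ^ 2 - 1 - 1)
      · have : ((a + 1)⁻¹) ^ 2 + ((a - 1)⁻¹) ^ 2 - (a⁻¹) ^ 2 - (a⁻¹) ^ 2 - 1 - 1 =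
            - (2 * (a ^ 2 + 1) * (a ^ 4 - 3 * a ^ 2 + 1)) *
              (((a + 1)⁻¹) ^ 2 * ((a - 1)⁻¹) ^ 2 * (a⁻¹) ^ 2) := by
          field_simp
          ring
        rw [this]
        simp [ha0, ha1, ha2, ha3, ha4, h2]
      · intro u v
        have e1 := hadj (a + 1) ha1 u v
        have e2 := hadj a ha0 u v
        have e3 := hadj (a - 1) ha2 u v
        simp only [sub_mul, add_mul, one_mul, map_sub, map_add, e1, e2, e3]
        rw [← AddMonoidHom.add_apply, ← map_add,
          show (a + 1) ^ 2 * u + (a - 1) ^ 2 * u = a ^ 2 * u + a ^ 2 * u + u + u by ring]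
        simp only [map_add, AddMonoidHom.add_apply]
        abel

abbrev Mat2 (F : Type*) := Matrix (Fin 2) (Fin 2) F

/-- `M` is a matrix representing the image of `g` in `PGL2`. -/
def MRep {G F : Type*} [Group G] [Field F] (f : G →* PGL2 F) (g : G) (M : Mat2 F) : Prop :=
  ∃ A : Matrix.GeneralLinearGroup (Fin 2) F, (A : Mat2 F) = M ∧ f g = QuotientGroup.mk A

section rep
variable {G F : Type*} [Group G] [Field F] {f : G →* PGL2 F}

lemma GL_center_iff (A : Matrix.GeneralLinearGroup (Fin 2) F) :
    A ∈ center (Matrix.GeneralLinearGroup (Fin 2) F) ↔ ∃ c : F, (A : Mat2 F) = c • 1 := by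
  rw [Matrix.GeneralLinearGroup.mem_center_iff_val_mem_range_scalar]
  constructor
  · rintro ⟨c, hc⟩
    exact ⟨c, by rw [← hc]; simp [Matrix.smul_one_eq_diagonal]⟩
  · rintro ⟨c, hc⟩
    exact ⟨c, by rw [hc]; simp [Matrix.smul_one_eq_diagonal]⟩

lemma MRep.exists (f : G →* PGL2 F) (g : G) : ∃ M, MRep f g M := by
  obtain ⟨A, hA⟩ := QuotientGroup.mk_surjective (f g)
  exact ⟨A, A, rfl, hA.symm⟩

lemma MRep.det_ne {g : G} {M : Mat2 F} (h : MRep f g M) : M.det ≠ 0 := by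
  obtain ⟨A, rfl, -⟩ := h
  exact A.det_ne_zero

lemma MRep.mul {g h : G} {M N : Mat2 F} (hg : MRep f g M) (hh : MRep f h N) :
    MRep f (g * h) (M * N) := by
  obtain ⟨A, rfl, hA⟩ := hg
  obtain ⟨B, rfl, hB⟩ := hh
  exact ⟨A * B, rfl, by rw [map_mul, hA, hB]; rfl⟩

lemma MRep.uniq {g : G} {M N : Mat2 F} (hg : MRep f g M) (hh : MRep f g N) :
    ∃ c : F, c ≠ 0 ∧ N = c • M := by
  obtain ⟨A, rfl, hA⟩ := hg
  obtain ⟨B, rfl, hB⟩ := hh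
  have h : (QuotientGroup.mk A : PGL2 F) = QuotientGroup.mk B := hA.symm.trans hB
  rw [QuotientGroup.eq, GL_center_iff] at h
  obtain ⟨c, hc⟩ := h
  have hB' : (B : Mat2 F) = c • (A : Mat2 F) := by
    have : B = A * (A⁻¹ * B) := by group
    rw [this, Units.val_mul, hc, mul_smul_comm, mul_one]
  refine ⟨c, ?_, hB'⟩
  rintro rfl
  have := B.det_ne_zero
  rw [hB'] at this
  simp at this

lemma MRep.smul {g : G} {M : Mat2 F} (hg : MRep f g M) {c : F} (hc : c ≠ 0) :
    MRep f g (c • M) := by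
  obtain ⟨A, rfl, hA⟩ := hg
  have hd : (c • (A : Mat2 F)).det ≠ 0 := by
    rw [Matrix.det_smul]
    exact mul_ne_zero (pow_ne_zero _ hc) A.det_ne_zero
  refine ⟨Matrix.GeneralLinearGroup.mkOfDetNeZero _ hd, rfl, ?_⟩
  rw [hA, QuotientGroup.eq, GL_center_iff]
  refine ⟨c, ?_⟩
  rw [Units.val_mul]
  change _ * (c • (A : Mat2 F)) = _
  rw [mul_smul_comm, ← Units.val_mul, inv_mul_cancel]
  rfl

lemma MRep.one : MRep f (1 : G) (1 : Mat2 F) := ⟨1, rfl, by simp⟩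

lemma MRep.inv {g : G} {M : Mat2 F} (hg : MRep f g M) : ∃ N, MRep f g⁻¹ N ∧ M * N = 1 ∧ N * M = 1 := by
  obtain ⟨A, rfl, hA⟩ := hg
  refine ⟨_, ⟨A⁻¹, rfl, by rw [map_inv, hA]; rfl⟩, ?_, ?_⟩
  · rw [← Units.val_mul, mul_inv_cancel]; rfl
  · rw [← Units.val_mul, inv_mul_cancel]; rfl

lemma MRep.comm {g h : G} {M N : Mat2 F} (hg : MRep f g M) (hh : MRep f h N) (hc : Commute g h) :
    ∃ c : F, c ≠ 0 ∧ M * N = c • (N * M) := by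
  have h1 := hg.mul hh
  rw [hc.eq] at h1
  exact (hh.mul hg).uniq h1

lemma MRep.center_iff (hker : f.ker = center G) {g : G} {M : Mat2 F} (hg : MRep f g M) :
    g ∈ center G ↔ ∃ c : F, M = c • 1 := by
  obtain ⟨A, rfl, hA⟩ := hg
  rw [← hker, MonoidHom.mem_ker, hA, QuotientGroup.eq_one_iff, GL_center_iff]

/-- elements with the same representing matrix differ by a central element -/
lemma MRep.same (hker : f.ker = center G) {g h : G} {M : Mat2 F} (hg : MRep f g M)
    (hh : MRep f h M) : ∃ z ∈ center G, h = g * z := by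
  refine ⟨g⁻¹ * h, ?_, by group⟩
  obtain ⟨A, rfl, hA⟩ := hg
  obtain ⟨B, hB', hB⟩ := hh
  have : A = B := Units.ext hB'.symm
  rw [← hker, MonoidHom.mem_ker, map_mul, map_inv, hA, hB, this, inv_mul_cancel]

lemma MRep.same_comm (hker : f.ker = center G) {g h k : G} {M : Mat2 F} (hg : MRep f g M)
    (hh : MRep f h M) (hk : Commute g k) : Commute h k := by
  obtain ⟨z, hz, rfl⟩ := hg.same hker hh
  exact hk.mul_left (Subgroup.mem_center_iff.1 hz k).symm

/-- the matrices of square determinant are hit -/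
def HitsSL (f : G →* PGL2 F) : Prop :=
  ∀ A : Matrix.SpecialLinearGroup (Fin 2) F, ∃ g, MRep f g (A : Mat2 F)

lemma HitsSL.exists (hf : HitsSL f) (M : Mat2 F) (e : F) (he : e ≠ 0) (hM : M.det = e ^ 2) :
    ∃ g, MRep f g M := by
  obtain ⟨g, hg⟩ := hf ⟨e⁻¹ • M, by
    rw [Matrix.det_smul, hM]; simp [he]⟩
  refine ⟨g, ?_⟩
  have := hg.smul he
  simpa [smul_smul, he] using this

/-- nonscalar matrices have commutative centralisers -/
lemma comm_span (M N : Mat2 F) (hM : ¬ ∃ c : F, M = c • 1) (h : M * N = N * M) :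
    ∃ a b : F, N = a • 1 + b • M := by
  have h00 := congrFun (congrFun h 0) 0
  have h01 := congrFun (congrFun h 0) 1
  have h10 := congrFun (congrFun h 1) 0
  simp only [Matrix.mul_apply, Fin.sum_univ_two] at h00 h01 h10
  by_cases hb : M 0 1 = 0
  · by_cases hc : M 1 0 = 0
    · have hd : M 0 0 - M 1 1 ≠ 0 := by
        intro hd
        apply hM
        refine ⟨M 0 0, ?_⟩
        ext i j
        fin_cases i <;> fin_cases j <;> simp [hb, hc]
        linear_combination -hd
      refine ⟨N 0 0 - (N 0 0 - N 1 1) / (M 0 0 - M 1 1) * M 0 0,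
        (N 0 0 - N 1 1) / (M 0 0 - M 1 1), ?_⟩
      have e1 : N 0 1 = 0 := by
        rw [hb] at h01
        apply (mul_right_inj' hd).1
        linear_combination h01
      have e2 : N 1 0 = 0 := by
        rw [hc] at h10
        apply (mul_right_inj' hd).1
        linear_combination -h10
      ext i j
      fin_cases i <;> fin_cases j <;> simp [hb, hc, e1, e2]
      field_simp
      ring
    · refine ⟨N 0 0 - N 1 0 / M 1 0 * M 0 0, N 1 0 / M 1 0, ?_⟩
      ext i j
      fin_cases i <;> fin_cases j <;> simp
      · field_simp
        linear_combination -h00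
      · field_simp
      · field_simp
        linear_combination -h10
  · refine ⟨N 0 0 - N 0 1 / M 0 1 * M 0 0, N 0 1 / M 0 1, ?_⟩
    ext i j
    fin_cases i <;> fin_cases j <;> simp
    · field_simp
    · field_simp
      linear_combination h00
    · field_simp
      linear_combination h01

lemma lin_inj {M : Mat2 F} (hM : ¬ ∃ c : F, M = c • 1) {a b c d : F}
    (h : a • (1 : Mat2 F) + b • M = c • 1 + d • M) : a = c ∧ b = d := by
  have hbd : b = d := by
    by_contra hne
    have hne' : b - d ≠ 0 := sub_ne_zero.2 hne
    apply hM
    refine ⟨(b - d)⁻¹ * (c - a), ?_⟩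
    have : (b - d) • M = (c - a) • (1 : Mat2 F) := by
      rw [sub_smul, sub_smul, sub_eq_sub_iff_add_eq_add, add_comm, h, add_comm]
    rw [mul_smul, ← this, smul_smul, inv_mul_cancel₀ hne', one_smul]
  subst hbd
  refine ⟨?_, rfl⟩
  have := congrFun (congrFun h 0) 0
  simpa using this

/-- Cayley-Hamilton -/
lemma sq_eq (M : Mat2 F) : M * M = M.trace • M - M.det • (1 : Mat2 F) := by
  ext i j
  fin_cases i <;> fin_cases j <;>
    simp [Matrix.mul_apply, Fin.sum_univ_two, Matrix.det_fin_two, Matrix.trace_fin_two] <;> ring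

lemma det_lin (M : Mat2 F) (a b : F) :
    (a • (1 : Mat2 F) + b • M).det = a ^ 2 + a * b * M.trace + b ^ 2 * M.det := by
  simp [Matrix.det_fin_two, Matrix.trace_fin_two]; ring

lemma trace_lin (M : Mat2 F) (a b : F) :
    (a • (1 : Mat2 F) + b • M).trace = 2 * a + b * M.trace := by
  simp [Matrix.trace_fin_two]; ring

lemma MRep.not_scalar (hker : f.ker = center G) {g : G} {M : Mat2 F} (hg : MRep f g M)
    (h : g ∉ center G) : ¬ ∃ c : F, M = c • 1 := fun hc => h ((hg.center_iff hker).2 hc)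

/-- the key dichotomy : representing matrices of commuting elements -/
lemma MRep.comm_or {g h : G} {M N : Mat2 F} (hg : MRep f g M) (hh : MRep f h N) (hc : Commute g h) :
    M * N = N * M ∨ (M * N = - (N * M) ∧ M.trace = 0 ∧ N.trace = 0 ∧ (2 : F) ≠ 0) := by
  obtain ⟨c, hc0, hc⟩ := hg.comm hh hc
  by_cases h1 : c = 1
  · left; rw [hc, h1, one_smul]
  · have hd := congrArg Matrix.det hc
    rw [Matrix.det_smul, Matrix.det_mul, Matrix.det_mul] at hd
    have hMN := mul_ne_zero hg.det_ne hh.det_ne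
    have hc2 : c ^ 2 = 1 := by
      apply (mul_left_inj' hMN).1
      simp only [Fintype.card_fin] at hd
      linear_combination -hd
    have hc3 : c = -1 := by
      rcases (sq_eq_sq_iff_eq_or_eq_neg (a := c) (b := 1)).1 (by rw [hc2, one_pow]) with h | h
      · exact absurd h h1
      · exact h
    have h2 : (2 : F) ≠ 0 := by
      intro h2
      apply h1
      linear_combination hc3 - h2
    subst hc3
    have key : ∀ A B : Mat2 F, A.det ≠ 0 → A * B = (-1 : F) • (B * A) → B.trace = 0 := by
      intro A B hA hAB
      have h00 := congrFun (congrFun hAB 0) 0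
      have h01 := congrFun (congrFun hAB 0) 1
      have h10 := congrFun (congrFun hAB 1) 0
      have h11 := congrFun (congrFun hAB 1) 1
      simp only [Matrix.mul_apply, Fin.sum_univ_two, Matrix.smul_apply, smul_eq_mul] at h00 h01 h10 h11
      rw [Matrix.det_fin_two] at hA
      rw [Matrix.trace_fin_two]
      have : (2 * (A 0 0 * A 1 1 - A 0 1 * A 1 0)) * (B 0 0 + B 1 1) = 0 := by
        linear_combination A 1 1 * h00 - A 0 1 * h10 - A 1 0 * h01 + A 0 0 * h11
      rcases mul_eq_zero.1 this with h | h
      · exact absurd h (mul_ne_zero h2 hA)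
      · exact h
    right
    refine ⟨by rw [hc]; simp, ?_, key M N hg.det_ne hc, h2⟩
    apply key N M hh.det_ne
    rw [hc, smul_smul]; simp

end rep

section torus
variable {G F : Type*} [Group G] [Field F] {f : G →* PGL2 F}

/-- the torus attached to a matrix -/
def Torus (f : G →* PGL2 F) (M : Mat2 F) : Subgroup G where
  carrier := {g | ∃ N, MRep f g N ∧ M * N = N * M}
  one_mem' := ⟨1, MRep.one, by simp⟩
  mul_mem' := by
    rintro a b ⟨A, hA, hA'⟩ ⟨B, hB, hB'⟩
    refine ⟨A * B, hA.mul hB, ?_⟩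
    rw [← mul_assoc, hA', mul_assoc, hB', mul_assoc]
  inv_mem' := by
    rintro a ⟨A, hA, hA'⟩
    obtain ⟨B, hB, h1, h2⟩ := hA.inv
    refine ⟨B, hB, ?_⟩
    calc M * B = (B * A) * M * B := by rw [h2, one_mul]
      _ = B * (M * A) * B := by rw [hA', mul_assoc B A M]
      _ = B * M * (A * B) := by simp only [mul_assoc]
      _ = B * M := by rw [h1, mul_one]

lemma mem_torus {M : Mat2 F} {g : G} : g ∈ Torus f M ↔ ∃ N, MRep f g N ∧ M * N = N * M := Iff.rfl

lemma torus_lin {M : Mat2 F} (hM : ¬ ∃ c : F, M = c • 1) {g : G} (hg : g ∈ Torus f M) :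
    ∃ ab : F × F, MRep f g (ab.1 • 1 + ab.2 • M) := by
  obtain ⟨N, hN, hc⟩ := hg
  obtain ⟨a, b, rfl⟩ := comm_span M N hM hc
  exact ⟨(a, b), hN⟩

lemma torus_any {M N : Mat2 F} {g : G} (hg : g ∈ Torus f M) (hN : MRep f g N) : M * N = N * M := by
  obtain ⟨A, hA, hA'⟩ := hg
  obtain ⟨c, hc, rfl⟩ := hA.uniq hN
  rw [mul_smul_comm, hA', smul_mul_assoc]

lemma lin_mul (M : Mat2 F) (a b c d : F) :
    (a • (1 : Mat2 F) + b • M) * (c • 1 + d • M) =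
      (a * c - b * d * M.det) • 1 + (a * d + b * c + b * d * M.trace) • M := by
  have : (a • (1 : Mat2 F) + b • M) * (c • 1 + d • M) =
      (a * c) • 1 + (a * d + b * c) • M + (b * d) • (M * M) := by
    simp only [add_mul, mul_add, smul_add, smul_mul_assoc, mul_smul_comm, one_mul, mul_one, smul_smul, add_smul]
    rw [mul_comm c a, mul_comm d a, mul_comm c b, mul_comm d b]
    abel
  rw [this, sq_eq, smul_sub, smul_smul, smul_smul, sub_smul, add_smul _ (b * d * _)]
  abel

lemma torus_comm [Finite G] (hker : f.ker = center G) {M : Mat2 F} (hM : ¬ ∃ c : F, M = c • 1)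
    (hdisc : M.trace ^ 2 - 4 * M.det ≠ 0) {g h : G} (hg : g ∈ Torus f M) (hh : h ∈ Torus f M) :
    Commute g h := by
  classical
  let K := AlgebraicClosure F
  let ι : F →+* K := algebraMap F K
  obtain ⟨r, hr⟩ : ∃ r : K, r ^ 2 - ι M.trace * r + ι M.det = 0 := by
    obtain ⟨r, hr⟩ := IsAlgClosed.exists_root
      (Polynomial.X ^ 2 + (Polynomial.C (- ι M.trace) * Polynomial.X + Polynomial.C (ι M.det)) : Polynomial K)
      (by
        rw [Polynomial.degree_add_eq_left_of_degree_lt]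
        · simp
        · rw [Polynomial.degree_X_pow]
          exact lt_of_le_of_lt Polynomial.degree_linear_le (by norm_num))
    refine ⟨r, ?_⟩
    simp only [Polynomial.IsRoot, Polynomial.eval_add, Polynomial.eval_pow, Polynomial.eval_X,
      Polynomial.eval_mul, Polynomial.eval_C] at hr
    linear_combination hr
  let s : K := ι M.trace - r
  have hrs : ι M.trace = r + s := by simp [s]
  have hrs' : ι M.det = r * s := by simp only [s]; linear_combination hr
  have hne : r - s ≠ 0 := by
    intro h
    apply hdisc
    apply ι.injective
    simp only [map_sub, map_pow, map_mul, map_ofNat, map_zero]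
    rw [hrs, hrs']
    linear_combination (r - s) * h
  choose ab hab using fun g : Torus f M => torus_lin hM g.2
  have hnz : ∀ a b : F, (a • (1 : Mat2 F) + b • M).det ≠ 0 →
      ι a + ι b * r ≠ 0 ∧ ι a + ι b * s ≠ 0 := by
    intro a b hd
    have : (ι a + ι b * r) * (ι a + ι b * s) ≠ 0 := by
      intro h
      apply hd
      apply ι.injective
      rw [det_lin]
      simp only [map_add, map_mul, map_pow, map_zero]
      rw [hrs, hrs']
      linear_combination h
    exact ⟨left_ne_zero_of_mul this, right_ne_zero_of_mul this⟩
  -- the character is well defined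
  have hχ : ∀ (g : G) (a b c d : F), MRep f g (a • 1 + b • M) → MRep f g (c • 1 + d • M) →
      (ι a + ι b * r) / (ι a + ι b * s) = (ι c + ι d * r) / (ι c + ι d * s) := by
    intro g a b c d h1 h2
    obtain ⟨e, he, he'⟩ := h1.uniq h2
    rw [smul_add, smul_smul, smul_smul] at he'
    obtain ⟨rfl, rfl⟩ := lin_inj hM he'
    have := (hnz _ _ h1.det_ne).2
    have := (hnz _ _ h2.det_ne).2
    have he'' : ι e ≠ 0 := by simpa using he
    rw [div_eq_div_iff (by assumption) (by assumption)]
    simp only [map_mul]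
    ring
  let χ : Torus f M →* K :=
    { toFun := fun g => (ι (ab g).1 + ι (ab g).2 * r) / (ι (ab g).1 + ι (ab g).2 * s)
      map_one' := by
        have := hχ 1 _ _ 1 0 (hab 1) (by simpa using MRep.one)
        simpa using this
      map_mul' := by
        intro g h
        have h1 := (hab g).mul (hab h)
        rw [lin_mul] at h1
        have := hχ _ _ _ _ _ (hab (g * h)) h1
        rw [this]
        rw [div_mul_div_comm]
        simp only [map_mul, map_add, map_sub, hrs, hrs']
        congr 1 <;> ring }
  have hkχ : χ.toHomUnits.rangeRestrict.ker ≤ center (Torus f M) := by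
    intro g hg
    rw [MonoidHom.ker_rangeRestrict, MonoidHom.mem_ker, Units.ext_iff] at hg
    change (ι (ab g).1 + ι (ab g).2 * r) / (ι (ab g).1 + ι (ab g).2 * s) = 1 at hg
    rw [div_eq_one_iff_eq (hnz _ _ (hab g).det_ne).2] at hg
    have h0 : ι (ab g).2 * (r - s) = 0 := by linear_combination hg
    have h1 : (ab g).2 = 0 := by
      rcases mul_eq_zero.1 h0 with h | h
      · simpa using h
      · exact absurd h hne
    have hc : (g : G) ∈ center G := by
      rw [(hab g).center_iff hker]
      exact ⟨(ab g).1, by rw [h1]; simp⟩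
    rw [Subgroup.mem_center_iff] at hc ⊢
    intro x
    exact Subtype.ext (hc x)
  have hfin : Finite χ.toHomUnits.range :=
    Finite.of_surjective _ χ.toHomUnits.rangeRestrict_surjective
  have hcyc : IsCyclic χ.toHomUnits.range := isCyclic_subgroup_units _
  have := (MonoidHom.isMulCommutative_of_isCyclic_of_ker_le_center
    χ.toHomUnits.rangeRestrict hkχ).is_comm.comm ⟨g, hg⟩ ⟨h, hh⟩
  exact congrArg Subtype.val this

end torus

section uni
open scoped commutatorElement
variable {G F : Type*} [Group G] [Field F] {f : G →* PGL2 F}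

lemma exists_nilp [Fintype F] {p n : ℕ} (hp : p.Prime) (hF : Nat.card F = p ^ n) {M : Mat2 F}
    (hM : ¬ ∃ c : F, M = c • 1)
    (hdisc : M.trace ^ 2 - 4 * M.det = 0) :
    ∃ (e : F) (N : Mat2 F), M = e • 1 + N ∧ N * N = 0 ∧ N ≠ 0 := by
  obtain ⟨e, he1, he2⟩ : ∃ e : F, M.trace = 2 * e ∧ M.det = e ^ 2 := by
    by_cases hp2 : p = 2
    · subst hp2
      have h2 : (2 : F) = 0 := by exact_mod_cast char_cast hF
      have hc : ringChar F = 2 := by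
        have : CharP F 2 := CharTwo.of_one_ne_zero_of_two_eq_zero one_ne_zero h2
        exact ringChar.eq F 2
      obtain ⟨e, he⟩ := FiniteField.isSquare_of_char_two hc M.det
      refine ⟨e, ?_, by rw [he, sq]⟩
      have : M.trace ^ 2 = 0 := by linear_combination hdisc + 2 * M.det * h2
      rw [eq_zero_of_pow_eq_zero this, h2, zero_mul]
    · have h2 := two_ne hp hp2 hF
      refine ⟨M.trace / 2, by field_simp, ?_⟩
      field_simp
      linear_combination -hdisc
  refine ⟨e, M - e • 1, by abel, ?_, ?_⟩
  · have : (M - e • 1) * (M - e • 1) = M * M - (2 * e) • M + (e ^ 2) • (1 : Mat2 F) := by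
      simp only [sub_mul, mul_sub, smul_mul_assoc, mul_smul_comm, one_mul, mul_one, two_mul,
        add_smul, smul_sub, smul_smul, sq]
      abel
    rw [this, sq_eq, he1, he2]
    abel
  · intro h
    exact hM ⟨e, sub_eq_zero.1 h⟩

lemma nilp_tr {N : Mat2 F} (h : N * N = 0) (h0 : N ≠ 0) : N.trace = 0 ∧ N.det = 0 := by
  have hd : N.det = 0 := by
    have := congrArg Matrix.det h
    rw [Matrix.det_mul] at this
    simpa using this
  refine ⟨?_, hd⟩
  have := sq_eq N
  rw [h, hd] at this
  simp only [zero_smul, sub_zero] at this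
  rcases smul_eq_zero.1 this.symm with h | h
  · exact h
  · exact absurd h h0

lemma nilp_conj {N : Mat2 F} (h : N * N = 0) (h0 : N ≠ 0) (s : F) (hs : s ≠ 0) :
    ∃ S : Mat2 F, S.det = 1 ∧ S * N = s ^ 2 • (N * S) := by
  obtain ⟨ht, hd⟩ := nilp_tr h h0
  have key : ∃ P : Mat2 F, P.det ≠ 0 ∧ N * P = P * !![0, 1; 0, 0] := by
    rw [Matrix.trace_fin_two] at ht
    rw [Matrix.det_fin_two] at hd
    by_cases hc : N 1 0 = 0
    · have ha : N 0 0 = 0 := by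
        have : N 0 0 ^ 2 = 0 := by linear_combination N 0 0 * ht - hd - N 0 1 * hc
        exact eq_zero_of_pow_eq_zero this
      have hb : N 1 1 = 0 := by linear_combination ht - ha
      refine ⟨!![N 0 1, 0; 0, 1], ?_, ?_⟩
      · rw [Matrix.det_fin_two_of]
        intro hz
        apply h0
        ext i j
        fin_cases i <;> fin_cases j <;> simp [ha, hb, hc]
        linear_combination hz
      · ext i j
        fin_cases i <;> fin_cases j <;> simp [Matrix.mul_apply, Fin.sum_univ_two, ha, hb, hc]
    · refine ⟨!![N 0 0, 1; N 1 0, 0], ?_, ?_⟩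
      · rw [Matrix.det_fin_two_of]
        simpa using hc
      · ext i j
        fin_cases i <;> fin_cases j <;> simp [Matrix.mul_apply, Fin.sum_univ_two]
        · linear_combination N 0 0 * ht - hd
        · linear_combination N 1 0 * ht
  obtain ⟨P, hP, hNP⟩ := key
  have hu : IsUnit P.det := isUnit_iff_ne_zero.2 hP
  refine ⟨P * !![s, 0; 0, s⁻¹] * P⁻¹, ?_, ?_⟩
  · rw [Matrix.det_mul, Matrix.det_mul, Matrix.det_fin_two_of, Matrix.det_nonsing_inv]
    simp only [mul_inv_cancel₀ hs, mul_zero, sub_zero, mul_one]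
    exact Ring.mul_inverse_cancel _ hu
  · have hN : N = P * !![0, 1; 0, 0] * P⁻¹ := by
      rw [← hNP, mul_assoc, Matrix.mul_nonsing_inv _ hu, mul_one]
    have hDE : (!![s, 0; 0, s⁻¹] : Mat2 F) * !![0, 1; 0, 0] =
        s ^ 2 • (!![0, 1; 0, 0] * !![s, 0; 0, s⁻¹]) := by
      ext i j
      fin_cases i <;> fin_cases j <;> simp
      field_simp
    have hPP : P⁻¹ * P = 1 := Matrix.nonsing_inv_mul _ hu
    have conj : ∀ A B : Mat2 F, (P * A * P⁻¹) * (P * B * P⁻¹) = P * (A * B) * P⁻¹ := by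
      intro A B
      calc (P * A * P⁻¹) * (P * B * P⁻¹) = P * A * (P⁻¹ * P) * B * P⁻¹ := by
            simp only [mul_assoc]
        _ = _ := by rw [hPP]; simp only [mul_assoc, mul_one]
    rw [hN, conj, conj, hDE, mul_smul_comm, smul_mul_assoc]

lemma comm_mul_left {a b c : G} (h : ⁅b, c⁆ ∈ center G) : ⁅a * b, c⁆ = ⁅a, c⁆ * ⁅b, c⁆ := by
  rw [Subgroup.mem_center_iff] at h
  have h1 := h a
  have : ⁅a * b, c⁆ = a * ⁅b, c⁆ * a⁻¹ * ⁅a, c⁆ := by simp only [commutatorElement_def]; group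
  rw [this, h1, mul_inv_cancel_right, ← h]

lemma comm_mul_right {a b c : G} (h : ⁅a, c⁆ ∈ center G) : ⁅a, b * c⁆ = ⁅a, b⁆ * ⁅a, c⁆ := by
  rw [Subgroup.mem_center_iff] at h
  have h1 := h b
  have : ⁅a, b * c⁆ = ⁅a, b⁆ * (b * ⁅a, c⁆ * b⁻¹) := by simp only [commutatorElement_def]; group
  rw [this, h1, mul_inv_cancel_right]

lemma comm_central_left {a z c : G} (hz : z ∈ center G) : ⁅a * z, c⁆ = ⁅a, c⁆ := by
  have h1 : ⁅z, c⁆ = 1 := by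
    rw [commutatorElement_eq_one_iff_mul_comm]; exact (Subgroup.mem_center_iff.1 hz c).symm
  rw [comm_mul_left (by rw [h1]; exact one_mem _), h1, mul_one]

lemma comm_central_right {a z c : G} (hz : z ∈ center G) : ⁅a, c * z⁆ = ⁅a, c⁆ := by
  have h1 : ⁅a, z⁆ = 1 := by
    rw [commutatorElement_eq_one_iff_mul_comm]; exact (Subgroup.mem_center_iff.1 hz a)
  rw [comm_mul_right (by rw [h1]; exact one_mem _), h1, mul_one]

/-- Commuting is transitive on preimages of unipotent subgroups. -/
lemma uni_trans [Fintype F] {p n : ℕ} (hp : p.Prime) (hF : Nat.card F = p ^ n)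
    (hker : f.ker = center G) (hSL : HitsSL f)
    {N : Mat2 F} (hN : N * N = 0) (hN0 : N ≠ 0) {x z w : G} {a b c : F}
    (hx : MRep f x (1 + a • N)) (hz : MRep f z (1 + b • N)) (hw : MRep f w (1 + c • N))
    (hb : b ≠ 0) (hxz : Commute x z) (hzw : Commute z w) : Commute x w := by
  obtain ⟨ht, hd⟩ := nilp_tr hN hN0
  have hmul : ∀ a b : F, (1 + a • N) * (1 + b • N) = 1 + (a + b) • N := by
    intro a b
    simp only [mul_add, add_mul, one_mul, mul_one, smul_mul_assoc, mul_smul_comm, hN, smul_zero,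
      add_smul, add_zero]
    abel
  have hu : ∀ a : F, ∃ g, MRep f g (1 + a • N) := by
    intro a
    apply hSL.exists _ 1 one_ne_zero
    have := det_lin N 1 a
    rw [one_smul, ht, hd] at this
    rw [this]; simp
  choose u hu using hu
  have hcen : ∀ a b, ⁅u a, u b⁆ ∈ center G := by
    intro a b
    have h1 := (hu a).mul (hu b)
    have h2 := (hu b).mul (hu a)
    rw [hmul] at h1 h2
    rw [add_comm b a] at h2
    obtain ⟨z, hz, h⟩ := h2.same hker h1
    have : ⁅u a, u b⁆ = z := by
      rw [commutatorElement_def, h, Subgroup.mem_center_iff.1 hz]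
      group
    rwa [this]
  have huadd : ∀ a b, ∃ z ∈ center G, u (a + b) = u a * u b * z := by
    intro a b
    have h1 := (hu a).mul (hu b)
    rw [hmul] at h1
    exact h1.same hker (hu (a + b))
  let _ : CommGroup (center G) :=
    { (inferInstance : Group (center G)) with
      mul_comm := fun a b => Subtype.ext (Subgroup.mem_center_iff.1 b.2 a) }
  let B : F →+ F →+ Additive (center G) :=
    AddMonoidHom.mk' (fun a => AddMonoidHom.mk' (fun b => Additive.ofMul ⟨⁅u a, u b⁆, hcen a b⟩) (by
      intro b c
      rw [← ofMul_mul]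
      congr 1
      apply Subtype.ext
      change ⁅u a, u (b + c)⁆ = ⁅u a, u b⁆ * ⁅u a, u c⁆
      obtain ⟨z, hz, h⟩ := huadd b c
      rw [h, comm_central_right hz, comm_mul_right (hcen _ _)])) (by
      intro a b
      ext c
      change ⁅u (a + b), u c⁆ = ⁅u a, u c⁆ * ⁅u b, u c⁆
      obtain ⟨z, hz, h⟩ := huadd a b
      rw [h, comm_central_left hz, comm_mul_left (hcen _ _)])
  have hB0 : ∀ a b, B a b = 0 ↔ Commute (u a) (u b) := by
    intro a b
    have : B a b = 0 ↔ ⁅u a, u b⁆ = 1 := by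
      change Additive.ofMul (⟨⁅u a, u b⁆, hcen a b⟩ : center G) = 0 ↔ _
      rw [ofMul_eq_zero, Subtype.ext_iff]
      rfl
    rw [this, commutatorElement_eq_one_iff_mul_comm]
    rfl
  have hBc : ∀ {g h : G} {a b : F}, MRep f g (1 + a • N) → MRep f h (1 + b • N) →
      (B a b = 0 ↔ Commute g h) := by
    intro g h a b hg hh
    rw [hB0]
    constructor
    · intro hc
      have h1 := (hu a).same_comm hker hg hc
      exact ((hu b).same_comm hker hh h1.symm).symm
    · intro hc
      have h1 := hg.same_comm hker (hu a) hc
      exact (hh.same_comm hker (hu b) h1.symm).symm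
  rw [← hBc hx hw]
  refine form_trans hp hF B (fun a => (hB0 a a).2 (Commute.refl _)) ?_ a b c hb
    ((hBc hx hz).2 hxz) ((hBc hz hw).2 hzw)
  intro s hs a b
  obtain ⟨S, hS1, hS2⟩ := nilp_conj hN hN0 s hs
  obtain ⟨t, ht⟩ := hSL.exists S 1 one_ne_zero (by simpa using hS1)
  have hconj : ∀ a, ∃ z ∈ center G, u (s ^ 2 * a) = t * u a * t⁻¹ * z := by
    intro a
    have h1 := ht.mul (hu a)
    have h2 := (hu (s ^ 2 * a)).mul ht
    have : S * (1 + a • N) = (1 + (s ^ 2 * a) • N) * S := by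
      rw [mul_add, add_mul, mul_smul_comm, hS2, smul_smul, smul_mul_assoc, mul_one, one_mul,
        mul_comm a]
    rw [this] at h1
    obtain ⟨z, hz, h⟩ := h1.same hker h2
    refine ⟨z, hz, ?_⟩
    have hz' := Subgroup.mem_center_iff.1 hz t⁻¹
    rw [mul_assoc, hz', ← mul_assoc, ← h]
    group
  change Additive.ofMul (⟨⁅u (s ^ 2 * a), u (s ^ 2 * b)⁆, _⟩ : center G) =
    Additive.ofMul (⟨⁅u a, u b⁆, _⟩ : center G)
  congr 1
  apply Subtype.ext
  change ⁅u (s ^ 2 * a), u (s ^ 2 * b)⁆ = ⁅u a, u b⁆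
  obtain ⟨z, hz, h⟩ := hconj a
  obtain ⟨z', hz', h'⟩ := hconj b
  rw [h, h', comm_central_left hz, comm_central_right hz']
  have : ⁅t * u a * t⁻¹, t * u b * t⁻¹⁆ = t * ⁅u a, u b⁆ * t⁻¹ := by
    simp only [commutatorElement_def]; group
  rw [this, Subgroup.mem_center_iff.1 (hcen a b) t, mul_inv_cancel_right]

end uni

section main
variable {G F : Type*} [Group G] [Field F] {f : G →* PGL2 F}

lemma mem_cent {x y : G} : y ∈ centralizer ({x} : Set G) ↔ Commute x y := by
  rw [Subgroup.mem_centralizer_singleton_iff]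
  exact ⟨fun h => h.symm, fun h => h.symm⟩

lemma uni_rep {e : F} {M N : Mat2 F} (hMN : M = e • 1 + N) (hN : N * N = 0) (hN0 : N ≠ 0)
    (hM : ¬ ∃ c : F, M = c • 1) {x : G} {X : Mat2 F} (hx : MRep f x X) (hc : M * X = X * M) :
    ∃ a : F, MRep f x (1 + a • N) := by
  obtain ⟨a, b, rfl⟩ := comm_span M X hM hc
  obtain ⟨ht, hd⟩ := nilp_tr hN hN0
  have h1 : a • (1 : Mat2 F) + b • M = (a + b * e) • 1 + b • N := by
    rw [hMN, smul_add, smul_smul, add_smul]; abel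
  rw [h1] at hx
  have hne : a + b * e ≠ 0 := by
    intro h
    apply hx.det_ne
    rw [det_lin, h, ht, hd]; ring
  refine ⟨(a + b * e)⁻¹ * b, ?_⟩
  have := hx.smul (inv_ne_zero hne)
  rwa [smul_add, smul_smul, smul_smul, inv_mul_cancel₀ hne, one_smul] at this

lemma disc_zero_comm {x z : G} {M X : Mat2 F} (hz : MRep f z M) (hx : MRep f x X)
    (hdisc : M.trace ^ 2 - 4 * M.det = 0) (hc : Commute z x) : M * X = X * M := by
  rcases hz.comm_or hx hc with h | ⟨-, h1, -, h2⟩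
  · exact h
  · exfalso
    rw [h1] at hdisc
    have : (2 * 2) * M.det = 0 := by linear_combination -hdisc
    exact mul_ne_zero (mul_ne_zero h2 h2) hz.det_ne this

lemma uni_trans' [Fintype F] {p n : ℕ} (hp : p.Prime) (hF : Nat.card F = p ^ n)
    (hker : f.ker = center G) (hSL : HitsSL f) {x z w : G} {M : Mat2 F}
    (hz : MRep f z M) (hzc : z ∉ center G) (hdisc : M.trace ^ 2 - 4 * M.det = 0)
    (hxz : Commute x z) (hzw : Commute z w) : Commute x w := by
  have hM := hz.not_scalar hker hzc
  obtain ⟨e, N, hMN, hN, hN0⟩ := exists_nilp hp hF hM hdisc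
  obtain ⟨X, hX⟩ := MRep.exists f x
  obtain ⟨W, hW⟩ := MRep.exists f w
  obtain ⟨a, ha⟩ := uni_rep hMN hN hN0 hM hX (disc_zero_comm hz hX hdisc hxz.symm)
  obtain ⟨b, hb⟩ := uni_rep hMN hN hN0 hM hz rfl
  obtain ⟨c, hc⟩ := uni_rep hMN hN hN0 hM hW (disc_zero_comm hz hW hdisc hzw)
  refine uni_trans hp hF hker hSL hN hN0 ha hb hc ?_ hxz hzw
  rintro rfl
  apply hzc
  rw [hb.center_iff hker]
  exact ⟨1, by simp⟩

lemma disc_lin (M : Mat2 F) (a b : F) :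
    (a • (1 : Mat2 F) + b • M).trace ^ 2 - 4 * (a • (1 : Mat2 F) + b • M).det =
      b ^ 2 * (M.trace ^ 2 - 4 * M.det) := by
  rw [det_lin, trace_lin]; ring

lemma lin_comm (M : Mat2 F) (a b : F) :
    M * (a • (1 : Mat2 F) + b • M) = (a • (1 : Mat2 F) + b • M) * M := by
  simp [mul_add, add_mul]

/-- commuting of matrices is transitive on nonscalar ones -/
lemma mat_trans {A B C : Mat2 F} (hB : ¬ ∃ c : F, B = c • 1) (h1 : A * B = B * A)
    (h2 : B * C = C * B) : A * C = C * A := by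
  obtain ⟨a, b, rfl⟩ := comm_span B A hB h1.symm
  simp [mul_add, add_mul, h2]

lemma torus_congr {A B : Mat2 F} (hA : ¬ ∃ c : F, A = c • 1) (hB : ¬ ∃ c : F, B = c • 1)
    (h1 : A * B = B * A) : Torus f A = Torus f B := by
  ext g
  rw [mem_torus, mem_torus]
  constructor
  · rintro ⟨N, hN, h⟩
    exact ⟨N, hN, mat_trans hA h1.symm h⟩
  · rintro ⟨N, hN, h⟩
    exact ⟨N, hN, mat_trans hB h1 h⟩

lemma torus_le_cent [Finite G] (hker : f.ker = center G) {x : G} {X : Mat2 F} (hx : MRep f x X)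
    (hxc : x ∉ center G) (hdisc : X.trace ^ 2 - 4 * X.det ≠ 0) :
    Torus f X ≤ centralizer ({x} : Set G) := by
  intro g hg
  rw [mem_cent]
  exact torus_comm hker (hx.not_scalar hker hxc) hdisc ⟨X, hx, rfl⟩ hg

lemma cent_le_torus {w : G} {W : Mat2 F} (hw : MRep f w W) (h : W.trace ≠ 0 ∨ (2 : F) = 0) :
    centralizer ({w} : Set G) ≤ Torus f W := by
  intro g hg
  rw [mem_cent] at hg
  obtain ⟨N, hN⟩ := MRep.exists f g
  refine ⟨N, hN, ?_⟩
  rcases hw.comm_or hN hg with h1 | ⟨-, h1, -, h2⟩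
  · exact h1
  · rcases h with h | h
    · exact absurd h1 h
    · exact absurd h h2

lemma good_of [Finite G] (hker : f.ker = center G) {x w : G} {X W : Mat2 F} (hx : MRep f x X)
    (hxc : x ∉ center G) (hmin : IsMinCentralizer x) (hdisc : X.trace ^ 2 - 4 * X.det ≠ 0)
    (hw : MRep f w W) (hW : ¬ ∃ c : F, W = c • 1) (hXW : X * W = W * X)
    (h : W.trace ≠ 0 ∨ (2 : F) = 0) : centralizer ({x} : Set G) = Torus f X := by
  have h1 := torus_le_cent hker hx hxc hdisc
  have h2 := cent_le_torus hw h
  rw [← torus_congr (hx.not_scalar hker hxc) hW hXW] at h2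
  have h3 := hmin w (fun hc => hW ((hw.center_iff hker).1 hc)) (h2.trans h1)
  exact le_antisymm (h3 ▸ h2) h1

/-- the case of `A₅ = PSL₂(5)` -/
lemma five_comm (hker : f.ker = center G)
    (h5 : (5 : F) = 0) (h4 : ∀ a : F, a ≠ 0 → a ^ 4 = 1)
    (hdet : ∀ (g : G) (N : Mat2 F), MRep f g N → N.det ^ 2 = 1) {x : G} {X : Mat2 F}
    (hx : MRep f x X) (hxc : x ∉ center G) (ht : X.trace = 0) {z w : G}
    (hz : Commute x z) (hw : Commute x w) : Commute z w := by
  have hX := hx.not_scalar hker hxc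
  have claim : ∀ w ∈ Torus f X, w ∈ center G ∨ ∃ ζ ∈ center G, w = x * ζ := by
    intro w hw
    obtain ⟨⟨a, b⟩, hab⟩ := torus_lin hX hw
    simp only at hab
    have h1 := hdet _ _ hab
    have hd := hdet _ _ hx
    rw [det_lin, ht] at h1
    by_cases hb : b = 0
    · left
      rw [hab.center_iff hker]
      exact ⟨a, by rw [hb]; simp⟩
    · by_cases ha : a = 0
      · right
        rw [ha, zero_smul, zero_add] at hab
        exact (hx.smul hb).same hker hab
      · exfalso
        have ha4 := h4 a ha
        have hb4 := h4 b hb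
        have e1 : 2 * (a ^ 2 * b ^ 2 * X.det) = -1 := by
          linear_combination h1 - ha4 - hb4 * X.det ^ 2 - hd
        have e2 : (a ^ 2 * b ^ 2 * X.det) ^ 2 = 1 := by
          linear_combination (b ^ 4 * X.det ^ 2) * ha4 + X.det ^ 2 * hb4 + hd
        have e3 : (3 : F) = 0 := by
          linear_combination (2 * (a ^ 2 * b ^ 2 * X.det) - 1) * e1 - 4 * e2
        have e4 : (1 : F) = 0 := by linear_combination 2 * e3 - h5
        exact one_ne_zero e4
  obtain ⟨Z, hZ⟩ := MRep.exists f z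
  obtain ⟨W, hW⟩ := MRep.exists f w
  have key : ∀ z ∈ Torus f X, ∀ w, Commute x w → Commute z w := by
    intro z hz w hw
    rcases claim z hz with h | ⟨ζ, h, rfl⟩
    · exact (Subgroup.mem_center_iff.1 h w).symm
    · exact hw.mul_left (Subgroup.mem_center_iff.1 h w).symm
  rcases hx.comm_or hZ hz with h1 | ⟨h1, -⟩
  · exact key z ⟨Z, hZ, h1⟩ w hw
  · rcases hx.comm_or hW hw with h2 | ⟨h2, -⟩
    · exact (key w ⟨W, hW, h2⟩ z hz).symm
    · obtain ⟨Y, hY, hY1, hY2⟩ := hZ.inv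
      have h3 : X * Y = - (Y * X) := by
        calc X * Y = (Y * Z) * X * Y := by rw [hY2, one_mul]
          _ = Y * (Z * X) * Y := by rw [mul_assoc Y Z X]
          _ = - (Y * X * (Z * Y)) := by
            rw [show Z * X = -(X * Z) by rw [h1, neg_neg]]
            simp only [mul_assoc, mul_neg, neg_mul]
          _ = - (Y * X) := by rw [hY1, mul_one]
      have h4 : X * (Y * W) = (Y * W) * X := by
        rw [← mul_assoc, h3, neg_mul, mul_assoc, h2, mul_neg, neg_neg, mul_assoc]
      have h5 := key (z⁻¹ * w) ⟨Y * W, hY.mul hW, h4⟩ z hz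
      have h6 : Commute z (z * (z⁻¹ * w)) := (Commute.refl z).mul_right h5.symm
      simpa using h6

lemma dich [Finite G] [Fintype F] {p n : ℕ} (hp : p.Prime) (hF : Nat.card F = p ^ n)
    (hq : 3 < p ^ n) (hker : f.ker = center G) (hSL : HitsSL f) {x : G} {X : Mat2 F}
    (hx : MRep f x X) (hxc : x ∉ center G) (hmin : IsMinCentralizer x)
    (hdisc : X.trace ^ 2 - 4 * X.det ≠ 0) :
    centralizer ({x} : Set G) = Torus f X ∨
      ∀ z, z ∉ center G → Commute x z → centralizer ({x} : Set G) = centralizer ({z} : Set G) := by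
  have hX := hx.not_scalar hker hxc
  by_cases h : X.trace ≠ 0 ∨ (2 : F) = 0
  · exact Or.inl (good_of hker hx hxc hmin hdisc hx hX rfl h)
  push Not at h
  obtain ⟨ht, h2⟩ := h
  have hd0 := hx.det_ne
  have hns : ∀ a b : F, b ≠ 0 → ¬ ∃ c : F, a • (1 : Mat2 F) + b • X = c • 1 := by
    rintro a b hb ⟨c, hc⟩
    have : a • (1 : Mat2 F) + b • X = c • 1 + (0 : F) • X := by rw [hc]; simp
    exact hb (lin_inj hX this).2
  by_cases hα : ∃ α : F, α ≠ 0 ∧ α ^ 2 - X.det ≠ 0 ∧ α ^ 2 + X.det ≠ 0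
  · obtain ⟨α, h0, h1, h1'⟩ := hα
    left
    have hdetW : ((α ^ 2 - X.det) • (1 : Mat2 F) + (2 * α) • X).det = (α ^ 2 + X.det) ^ 2 := by
      rw [det_lin, ht]; ring
    obtain ⟨w, hw⟩ := hSL.exists _ _ h1' hdetW
    refine good_of hker hx hxc hmin hdisc hw (hns _ _ (mul_ne_zero h2 h0)) (lin_comm _ _ _) ?_
    left
    rw [trace_lin, ht, mul_zero, add_zero]
    exact mul_ne_zero h2 h1
  push Not at hα
  have hcard : Nat.card F ≤ 5 := by
    by_contra! hlt
    obtain ⟨a, ha⟩ := exists_ne_of_monic (F := F)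
        (Polynomial.X * (Polynomial.X ^ 2 - Polynomial.C X.det) *
          (Polynomial.X ^ 2 + Polynomial.C X.det))
        (by monicity!) (lt_of_le_of_lt (by compute_degree) hlt)
    simp only [Polynomial.eval_mul, Polynomial.eval_add, Polynomial.eval_pow, Polynomial.eval_X,
        Polynomial.eval_sub, Polynomial.eval_C] at ha
    have ha0 : a ≠ 0 := by rintro rfl; simp at ha
    have ha1 : a ^ 2 - X.det ≠ 0 := by intro h; simp [h] at ha
    have ha2 := hα a ha0 ha1
    simp [ha2] at ha
  have hcard5 : Nat.card F = 5 := by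
    have : Nat.card F ≠ 4 := by
      intro h
      apply h2
      have h4 : ((Nat.card F : ℕ) : F) = 0 := by
        rw [Nat.card_eq_fintype_card]; exact Nat.cast_card_eq_zero F
      rw [h] at h4
      have : (2 : F) ^ 2 = 0 := by push_cast at h4; linear_combination h4
      exact eq_zero_of_pow_eq_zero this
    omega
  have h5 : (5 : F) = 0 := by
    have h4 : ((Nat.card F : ℕ) : F) = 0 := by
      rw [Nat.card_eq_fintype_card]; exact Nat.cast_card_eq_zero F
    rw [hcard5] at h4
    exact_mod_cast h4
  have h4 : ∀ a : F, a ≠ 0 → a ^ 4 = 1 := by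
    intro a ha
    have := FiniteField.pow_card_sub_one_eq_one a ha
    rwa [← Nat.card_eq_fintype_card, hcard5] at this
  have hsq : ∀ a : F, a ^ 2 = 1 → ∃ e : F, e ≠ 0 ∧ a = e ^ 2 := by
    intro a ha
    rcases (sq_eq_sq_iff_eq_or_eq_neg (a := a) (b := 1)).1 (by rw [ha, one_pow]) with h | h
    · exact ⟨1, one_ne_zero, by rw [h]; ring⟩
    · exact ⟨2, h2, by rw [h]; linear_combination -h5⟩
  by_cases hdet : ∀ (g : G) (N : Mat2 F), MRep f g N → N.det ^ 2 = 1
  · right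
    intro z hz hxz
    obtain ⟨Z, hZ⟩ := MRep.exists f z
    have hZt : Z.trace = 0 := by
      rcases hx.comm_or hZ hxz with h | ⟨-, -, h, -⟩
      · -- then `Z` is a scalar multiple of `X`
        obtain ⟨a, b, rfl⟩ := comm_span X Z hX h
        have hb : b ≠ 0 := by
          rintro rfl
          exact hz ((hZ.center_iff hker).2 ⟨a, by simp⟩)
        have h1 := hdet _ _ hZ
        have hd := hdet _ _ hx
        rw [det_lin, ht] at h1
        have hb4 := h4 b hb
        have ha : a = 0 := by
          by_contra ha
          have ha4 := h4 a ha
          have e1 : 2 * (a ^ 2 * b ^ 2 * X.det) = -1 := by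
            linear_combination h1 - ha4 - hb4 * X.det ^ 2 - hd
          have e2 : (a ^ 2 * b ^ 2 * X.det) ^ 2 = 1 := by
            linear_combination (b ^ 4 * X.det ^ 2) * ha4 + X.det ^ 2 * hb4 + hd
          have e3 : (3 : F) = 0 := by
            linear_combination (2 * (a ^ 2 * b ^ 2 * X.det) - 1) * e1 - 4 * e2
          have e4 : (1 : F) = 0 := by linear_combination 2 * e3 - h5
          exact one_ne_zero e4
        rw [trace_lin, ha, ht]; ring
      · exact h
    apply le_antisymm
    · intro w hw
      rw [mem_cent] at hw ⊢
      exact five_comm hker h5 h4 hdet hx hxc ht hxz hw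
    · intro w hw
      rw [mem_cent] at hw ⊢
      exact five_comm hker h5 h4 hdet hZ hz hZt hxz.symm hw
  · left
    push Not at hdet
    obtain ⟨g, N, hN, hN2⟩ := hdet
    have hN4 := h4 _ hN.det_ne
    have hNm : N.det ^ 2 = -1 := by
      have : (N.det ^ 2 - 1) * (N.det ^ 2 + 1) = 0 := by linear_combination hN4
      rcases mul_eq_zero.1 this with h | h
      · exact absurd (by linear_combination h) hN2
      · linear_combination h
    obtain ⟨a, ha, haX⟩ : ∃ a : F, a ≠ 0 ∧ (a ^ 2 + X.det) ^ 2 = -1 := by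
      by_cases h1 : (1 : F) ^ 2 - X.det = 0
      · refine ⟨1, one_ne_zero, ?_⟩
        have : X.det = 1 := by linear_combination -h1
        rw [this]; linear_combination h5
      · have h1' := hα 1 one_ne_zero h1
        refine ⟨2, h2, ?_⟩
        have : X.det = -1 := by linear_combination h1'
        rw [this]; linear_combination 2 * h5
    have hW : (a • (1 : Mat2 F) + (1 : F) • X).det = a ^ 2 + X.det := by
      rw [det_lin, ht]; ring
    obtain ⟨e, he, hee⟩ := hsq ((a • (1 : Mat2 F) + (1 : F) • X) * N).det (by
      rw [Matrix.det_mul, hW, mul_pow, haX, hNm]; ring)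
    obtain ⟨k, hk⟩ := hSL.exists _ e he hee
    obtain ⟨N', hN', hNN, -⟩ := hN.inv
    have hw := hk.mul hN'
    rw [mul_assoc, hNN, mul_one] at hw
    refine good_of hker hx hxc hmin hdisc hw (hns _ _ one_ne_zero) (lin_comm _ _ _) ?_
    left
    rw [trace_lin, ht, mul_zero, add_zero]
    exact mul_ne_zero h2 ha

lemma main_aux [Finite G] [Fintype F] {p n : ℕ} (hp : p.Prime) (hF : Nat.card F = p ^ n)
    (hq : 3 < p ^ n) (hker : f.ker = center G) (hSL : HitsSL f) : IsCAminGroup G := by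
  intro x y hx hy hmx hmy hne
  apply le_antisymm
  swap
  · exact le_inf (Subgroup.center_le_centralizer _) (Subgroup.center_le_centralizer _)
  intro z hz
  by_contra hzc
  apply hne
  rw [Subgroup.mem_inf, mem_cent, mem_cent] at hz
  obtain ⟨hxz, hyz⟩ := hz
  obtain ⟨X, hX⟩ := MRep.exists f x
  obtain ⟨Y, hY⟩ := MRep.exists f y
  obtain ⟨Z, hZ⟩ := MRep.exists f z
  have hZs := hZ.not_scalar hker hzc
  by_cases hdisc : Z.trace ^ 2 - 4 * Z.det = 0
  · have key : ∀ x y : G, x ∉ center G → Commute x z → Commute y z →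
        centralizer ({x} : Set G) ≤ centralizer ({y} : Set G) := by
      intro x y hx hxz hyz w hw
      rw [mem_cent] at hw ⊢
      obtain ⟨X, hX⟩ := MRep.exists f x
      have hc := disc_zero_comm hZ hX hdisc hxz.symm
      obtain ⟨a, b, hab⟩ := comm_span Z X hZs hc
      have hXd : X.trace ^ 2 - 4 * X.det = 0 := by
        rw [hab, disc_lin, hdisc, mul_zero]
      have h1 : Commute w z := uni_trans' hp hF hker hSL hX hx hXd hw.symm hxz
      exact uni_trans' hp hF hker hSL hZ hzc hdisc hyz h1.symm
    exact le_antisymm (key x y hx hxz hyz) (key y x hy hyz hxz)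
  · have hdx : ∀ (x : G) (X : Mat2 F), x ∉ center G → MRep f x X → Commute x z →
        X.trace ^ 2 - 4 * X.det ≠ 0 := by
      intro x X hx hX hxz h
      have hc := disc_zero_comm hX hZ h hxz
      obtain ⟨a, b, hab⟩ := comm_span X Z (hX.not_scalar hker hx) hc
      apply hdisc
      rw [hab, disc_lin, h, mul_zero]
    have hd1 := dich hp hF hq hker hSL hX hx hmx (hdx x X hx hX hxz)
    have hd2 := dich hp hF hq hker hSL hY hy hmy (hdx y Y hy hY hyz)
    have hT : ∀ (x : G) (X : Mat2 F), x ∉ center G → MRep f x X → Commute x z →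
        centralizer ({x} : Set G) = Torus f X → centralizer ({x} : Set G) = Torus f Z := by
      intro x X hx hX hxz h
      rw [h]
      have : z ∈ Torus f X := by rw [← h, mem_cent]; exact hxz
      exact torus_congr (hX.not_scalar hker hx) hZs (torus_any this hZ)
    have hle := torus_le_cent hker hZ hzc hdisc
    rcases hd1 with h1 | h1 <;> rcases hd2 with h2 | h2
    · rw [hT x X hx hX hxz h1, hT y Y hy hY hyz h2]
    · apply hmy x hx
      rw [hT x X hx hX hxz h1, h2 z hzc hyz]
      exact hle
    · symm
      apply hmx y hy
      rw [hT y Y hy hY hyz h2, h1 z hzc hxz]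
      exact hle
    · rw [h1 z hzc hxz, h2 z hzc hyz]

end main

theorem psl_pgl_isCAmin (G : Type*) [Group G] [Finite G] (p n : ℕ)
    (hp : p.Prime) (hn : 1 ≤ n) (hpn : 3 < p ^ n)
    (F : Type*) [Field F] [Fintype F] (hF : Nat.card F = p ^ n)
    (h : Nonempty ((G ⧸ center G) ≃* PSL2 F) ∨
         Nonempty ((G ⧸ center G) ≃* PGL2 F)) :
    IsCAminGroup G := by
  rcases h with ⟨⟨φ⟩⟩ | ⟨⟨φ⟩⟩
  · let ψ : PSL2 F →* PGL2 F := QuotientGroup.map _ _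
      (Matrix.SpecialLinearGroup.toGL (n := Fin 2) (R := F))
      (fun g hg => (Matrix.SpecialLinearGroup.toGL_mem_center_iff _).2 hg)
    have hψ : Function.Injective ψ := by
      rw [injective_iff_map_eq_one]
      intro a ha
      obtain ⟨A, rfl⟩ := QuotientGroup.mk_surjective a
      have ha' : (QuotientGroup.mk (Matrix.SpecialLinearGroup.toGL A) : PGL2 F) = 1 := ha
      rw [QuotientGroup.eq_one_iff] at ha' ⊢
      exact (Matrix.SpecialLinearGroup.toGL_mem_center_iff _).1 ha'
    refine main_aux (f := ψ.comp (φ.toMonoidHom.comp (QuotientGroup.mk' (center G)))) hp hF hpn ?_ ?_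
    · ext g
      rw [MonoidHom.mem_ker]
      change ψ (φ (QuotientGroup.mk g)) = 1 ↔ _
      rw [← map_one ψ, hψ.eq_iff, ← map_one φ, φ.injective.eq_iff, QuotientGroup.eq_one_iff]
    · intro A
      obtain ⟨g, hg⟩ := QuotientGroup.mk_surjective (φ.symm (QuotientGroup.mk A))
      refine ⟨g, Matrix.SpecialLinearGroup.toGL A, rfl, ?_⟩
      change ψ (φ (QuotientGroup.mk g)) = _
      rw [hg, MulEquiv.apply_symm_apply]
      rfl
  · refine main_aux (f := φ.toMonoidHom.comp (QuotientGroup.mk' (center G))) hp hF hpn ?_ ?_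
    · ext g
      rw [MonoidHom.mem_ker]
      change φ (QuotientGroup.mk g) = 1 ↔ _
      rw [← map_one φ, φ.injective.eq_iff, QuotientGroup.eq_one_iff]
    · intro A
      obtain ⟨g, hg⟩ := QuotientGroup.mk_surjective
        (φ.symm (QuotientGroup.mk (Matrix.SpecialLinearGroup.toGL A)))
      refine ⟨g, Matrix.SpecialLinearGroup.toGL A, rfl, ?_⟩
      change φ (QuotientGroup.mk g) = _
      rw [hg, MulEquiv.apply_symm_apply]
end

section
/- Let G be a finite group, p a prime and n ≥ 1 with p^n > 3, and suppose G/Z(G) is isomorphic to PSL₂(𝔽_{p^n}) or to PGL₂(𝔽_{p^n}), where 𝔽_{p^n} is the finite field with p^n elements. Then G is an F_min-group. -/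
open Subgroup

/-- The centre of a subgroup `H`, viewed as a subgroup of the ambient group `G`:
the elements of `H` commuting with every element of `H`. -/
def subgroupCenter {G : Type*} [Group G] (H : Subgroup G) : Subgroup G :=
  H ⊓ centralizer (H : Set G)

/-- `G` is an `F_min`-group: the centres of any two distinct minimal non-central
element centralisers intersect in the centre of `G`. -/
def IsFminGroup (G : Type*) [Group G] : Prop :=
  ∀ x y : G, x ∉ center G → y ∉ center G → IsMinCentralizer x → IsMinCentralizer y →
    centralizer ({x} : Set G) ≠ centralizer ({y} : Set G) →
    subgroupCenter (centralizer ({x} : Set G)) ⊓ subgroupCenter (centralizer ({y} : Set G))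
      = center G

namespace Fmin
open Matrix

section mat

lemma mat_ext {F : Type*} {A B : Matrix (Fin 2) (Fin 2) F} (h00 : A 0 0 = B 0 0) (h01 : A 0 1 = B 0 1)
    (h10 : A 1 0 = B 1 0) (h11 : A 1 1 = B 1 1) : A = B := by
  ext i j; fin_cases i <;> fin_cases j <;> assumption

variable {F : Type*} [Field F]

lemma centralizer_mat (X M : Matrix (Fin 2) (Fin 2) F) (h : X * M = M * X)
    (hM : ¬ ∃ c : F, M = c • (1 : Matrix (Fin 2) (Fin 2) F)) :
    ∃ a b : F, X = a • (1 : Matrix (Fin 2) (Fin 2) F) + b • M := by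
  have e00 := congrFun (congrFun h 0) 0
  have e01 := congrFun (congrFun h 0) 1
  have e10 := congrFun (congrFun h 1) 0
  have e11 := congrFun (congrFun h 1) 1
  simp only [mul_apply, Fin.sum_univ_two] at e00 e01 e10 e11
  by_cases h1 : M 0 1 = 0
  · by_cases h2 : M 1 0 = 0
    · have h3 : M 0 0 - M 1 1 ≠ 0 := by
        intro h3
        apply hM
        refine ⟨M 0 0, mat_ext ?_ ?_ ?_ ?_⟩ <;> simp [h1, h2]
        linear_combination -h3
      have x01 : X 0 1 = 0 := by
        have : (M 0 0 - M 1 1) * X 0 1 = 0 := by rw [h1] at e01; linear_combination -e01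
        simpa [h3] using this
      have x10 : X 1 0 = 0 := by
        have : (M 0 0 - M 1 1) * X 1 0 = 0 := by rw [h2] at e10; linear_combination e10
        simpa [h3] using this
      refine ⟨X 0 0 - (X 0 0 - X 1 1) / (M 0 0 - M 1 1) * M 0 0, (X 0 0 - X 1 1) / (M 0 0 - M 1 1), mat_ext ?_ ?_ ?_ ?_⟩ <;>
        simp [h1, h2, x01, x10]
      field_simp
      ring
    · refine ⟨X 0 0 - X 1 0 / M 1 0 * M 0 0, X 1 0 / M 1 0, mat_ext ?_ ?_ ?_ ?_⟩ <;> simp [h2]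
      · rw [h1] at e00 ⊢
        have : X 0 1 * M 1 0 = 0 := by linear_combination e00
        simpa [h2] using this
      · field_simp
        linear_combination e10
  · refine ⟨X 0 0 - X 0 1 / M 0 1 * M 0 0, X 0 1 / M 0 1, mat_ext ?_ ?_ ?_ ?_⟩ <;> simp [h1]
    · field_simp
      linear_combination -e00
    · field_simp
      linear_combination -e01

lemma comm_scalar (X M : Matrix (Fin 2) (Fin 2) F) (c : F) (hX : X.det ≠ 0) (hM : M.det ≠ 0)
    (h : X * M = c • (M * X)) : c = 1 ∨ c = -1 := by
  have := congrArg det h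
  rw [det_smul, det_mul, det_mul] at this
  simp only [Fintype.card_fin] at this
  have h2 : (c ^ 2 - 1) * (X.det * M.det) = 0 := by linear_combination -this
  have h3 : c ^ 2 - 1 = 0 := by simpa [hX, hM] using h2
  have : (c - 1) * (c + 1) = 0 := by linear_combination h3
  rcases mul_eq_zero.1 this with h | h
  · left; linear_combination h
  · right; linear_combination h

lemma anti_trace (X M : Matrix (Fin 2) (Fin 2) F) (hX : X.det ≠ 0) (h2 : (2 : F) ≠ 0)
    (h : X * M = -(M * X)) : M.trace = 0 := by
  have h1 : (X * M * X.adjugate).trace = X.det * M.trace := by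
    rw [trace_mul_comm, ← mul_assoc, adjugate_mul]; simp
  have h3 : (X * M * X.adjugate).trace = -(X.det * M.trace) := by
    rw [h, neg_mul, mul_assoc, mul_adjugate]; simp
  have : 2 * X.det * M.trace = 0 := by linear_combination -h1 + h3
  simpa [h2, hX] using this

lemma cayley (M : Matrix (Fin 2) (Fin 2) F) : M * M = M.trace • M - M.det • (1 : Matrix (Fin 2) (Fin 2) F) := by
  apply mat_ext <;> simp [mul_apply, Fin.sum_univ_two, trace_fin_two, det_fin_two] <;> ring

lemma det_lin (M : Matrix (Fin 2) (Fin 2) F) (a b : F) :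
    (a • (1 : Matrix (Fin 2) (Fin 2) F) + b • M).det = a ^ 2 + a * b * M.trace + b ^ 2 * M.det := by
  simp [trace_fin_two, det_fin_two]; ring

lemma trace_lin (M : Matrix (Fin 2) (Fin 2) F) (a b : F) :
    (a • (1 : Matrix (Fin 2) (Fin 2) F) + b • M).trace = 2 * a + b * M.trace := by
  simp [trace_fin_two]; ring

lemma mul_lin (M : Matrix (Fin 2) (Fin 2) F) (a b a' b' : F) :
    (a • (1 : Matrix (Fin 2) (Fin 2) F) + b • M) * (a' • (1 : Matrix (Fin 2) (Fin 2) F) + b' • M) =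
      (a * a' - b * b' * M.det) • (1 : Matrix (Fin 2) (Fin 2) F)
        + (a * b' + a' * b + b * b' * M.trace) • M := by
  apply mat_ext <;> simp [mul_apply, Fin.sum_univ_two, trace_fin_two, det_fin_two] <;> ring

lemma lin_unique (M : Matrix (Fin 2) (Fin 2) F)
    (hM : ¬ ∃ c : F, M = c • (1 : Matrix (Fin 2) (Fin 2) F)) (a b a' b' : F)
    (h : a • (1 : Matrix (Fin 2) (Fin 2) F) + b • M = a' • (1 : Matrix (Fin 2) (Fin 2) F) + b' • M) :
    a = a' ∧ b = b' := by
  have hb : b = b' := by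
    by_contra hb
    have hb' : b - b' ≠ 0 := sub_ne_zero.2 hb
    apply hM
    refine ⟨(b - b')⁻¹ * (a' - a), ?_⟩
    have : (b - b') • M = (a' - a) • (1 : Matrix (Fin 2) (Fin 2) F) := by
      rw [sub_smul, sub_smul, sub_eq_sub_iff_add_eq_add, add_comm, h, add_comm]
    rw [mul_smul, ← this, smul_smul, inv_mul_cancel₀ hb', one_smul]
  subst hb
  have := congrFun (congrFun h 0) 0
  simp at this
  exact ⟨this, rfl⟩

/-- The conjugating element acting on a nilpotent matrix by a square. -/
lemma exists_diag (N : Matrix (Fin 2) (Fin 2) F) (ht : N.trace = 0) (hd : N.det = 0)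
    (t : F) (h0 : t ≠ 0) : ∃ D : Matrix (Fin 2) (Fin 2) F, D.det = 1 ∧ D * N = t ^ 2 • (N * D) := by
  rw [trace_fin_two] at ht
  rw [det_fin_two] at hd
  have h11 : N 1 1 = - N 0 0 := by linear_combination ht
  by_cases hb : N 0 1 = 0
  · have h00 : N 0 0 = 0 := by
      rw [h11, hb] at hd
      have : N 0 0 ^ 2 = 0 := by linear_combination -hd
      simpa using this
    refine ⟨!![t⁻¹, 0; 0, t], by simp [det_fin_two, h0], ?_⟩
    apply mat_ext <;> simp [mul_apply, Fin.sum_univ_two, h11, h00, hb]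
    field_simp
  · refine ⟨!![t, 0; -(N 0 0 / N 0 1) * (t - t⁻¹), t⁻¹], by simp [det_fin_two, h0], ?_⟩
    rw [h11] at hd
    apply mat_ext <;> simp [mul_apply, Fin.sum_univ_two, h11] <;> field_simp
    · ring
    · linear_combination (t ^ 4 - 1) * hd
    · ring

end mat

lemma exists_sq {F : Type*} [Field F] [Fintype F] (h2 : (2 : F) ≠ 0 → 13 < Nat.card F)
    (h4 : 4 < Nat.card F) :
    ∃ a b : F, a ≠ 0 ∧ b ≠ 0 ∧ 1 + a ^ 2 = b ^ 2 ∧ 1 + a ^ 2 + a ^ 4 ≠ 0 := by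
  open Polynomial in
  by_cases h : (2 : F) = 0
  · have hp : (X * (X + 1) * (X ^ 2 + X + 1) : F[X]).Monic := by monicity!
    have hd : (X * (X + 1) * (X ^ 2 + X + 1) : F[X]).natDegree = 4 := by compute_degree!
    obtain ⟨a, ha⟩ := Polynomial.exists_eval_ne_zero_of_natDegree_lt_card _ hp.ne_zero
      (by rw [hd, Cardinal.mk_fintype, ← Nat.card_eq_fintype_card]; exact_mod_cast h4)
    simp only [eval_mul, eval_add, eval_pow, eval_X, eval_one, mul_ne_zero_iff] at ha
    obtain ⟨⟨ha, hb⟩, hc⟩ := ha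
    refine ⟨a, a + 1, ha, hb, by linear_combination -a * h, ?_⟩
    have : 1 + a ^ 2 + a ^ 4 = (a ^ 2 + a + 1) ^ 2 := by
      linear_combination -(a ^ 3 + a ^ 2 + a) * h
    rw [this]; exact pow_ne_zero _ hc
  · have hp : (X * (X ^ 2 - 1) * (X ^ 2 + 1) * ((X ^ 2 - 1) ^ 4 + C 4 * X ^ 2 * (X ^ 2 - 1) ^ 2 + C 16 * X ^ 4) : F[X]).Monic := by monicity!
    have hd : (X * (X ^ 2 - 1) * (X ^ 2 + 1) * ((X ^ 2 - 1) ^ 4 + C 4 * X ^ 2 * (X ^ 2 - 1) ^ 2 + C 16 * X ^ 4) : F[X]).natDegree = 13 := by compute_degree!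
    obtain ⟨m, hm⟩ := Polynomial.exists_eval_ne_zero_of_natDegree_lt_card _ hp.ne_zero
      (by rw [hd, Cardinal.mk_fintype, ← Nat.card_eq_fintype_card]; exact_mod_cast h2 h)
    simp only [eval_mul, eval_add, eval_sub, eval_pow, eval_X, eval_one, eval_C, mul_ne_zero_iff] at hm
    obtain ⟨⟨⟨hm, ha⟩, hb⟩, hc⟩ := hm
    have h2m : 2 * m ≠ 0 := mul_ne_zero h hm
    refine ⟨(m ^ 2 - 1) / (2 * m), (m ^ 2 + 1) / (2 * m), div_ne_zero ha h2m, div_ne_zero hb h2m, ?_, ?_⟩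
    · field_simp; ring
    · intro hk
      apply hc
      field_simp at hk
      linear_combination hk

lemma form_trivial {F : Type*} [Field F] {C : Type*} [Group C] (B : F → F → C)
    (hl : ∀ u u' v, B (u + u') v = B u v * B u' v)
    (hr : ∀ u v v', B u (v + v') = B u v * B u v')
    (ht : ∀ t, t ≠ 0 → ∀ u v, B (t ^ 2 * u) (t ^ 2 * v) = B u v)
    (a b : F) (ha : a ≠ 0) (hb : b ≠ 0) (hab : 1 + a ^ 2 = b ^ 2)
    (hk : 1 + a ^ 2 + a ^ 4 ≠ 0) (u v : F) : B u v = 1 := by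
  have key : ∀ t, t ≠ 0 → ∀ u v, B (t ^ 2 * u) v = B u ((t ^ 2)⁻¹ * v) := by
    intro t h0 u v
    rw [← ht t h0 u, ← mul_assoc, mul_inv_cancel₀ (pow_ne_zero _ h0), one_mul]
  have h1 : ∀ v, B u ((b ^ 2)⁻¹ * v) = B u (v + (a ^ 2)⁻¹ * v) := by
    intro v
    rw [hr, ← key b hb, ← key a ha, ← hl, ← hab]; congr 1; ring
  have h2 := h1 ((a ^ 2 * b ^ 2) / (1 + a ^ 2 + a ^ 4) * v)
  have h3 : (a ^ 2 * b ^ 2) / (1 + a ^ 2 + a ^ 4) * v + (a ^ 2)⁻¹ * ((a ^ 2 * b ^ 2) / (1 + a ^ 2 + a ^ 4) * v)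
    = (b ^ 2)⁻¹ * ((a ^ 2 * b ^ 2) / (1 + a ^ 2 + a ^ 4) * v) + v := by
    field_simp
    rw [← hab]
    ring
  rw [h3, hr] at h2
  exact (mul_eq_left.1 h2.symm)

/-- A family of matrices representing, up to scalars, the elements of `G` modulo its centre. -/
structure Rep (G : Type*) [Group G] (F : Type*) [Field F] (P : F → Prop) where
  r : G → Matrix (Fin 2) (Fin 2) F
  P0 : ∀ d, P d → d ≠ 0
  P1 : P 1
  hP : ∀ g, P (r g).det
  hmul : ∀ g h, ∃ c : F, c ≠ 0 ∧ r g * r h = c • r (g * h)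
  hcen : ∀ g, g ∈ center G ↔ ∃ c : F, r g = c • (1 : Matrix (Fin 2) (Fin 2) F)
  hsur : ∀ M, P M.det → ∃ g, ∃ c : F, c ≠ 0 ∧ r g = c • M

section rep
variable {G : Type*} [Group G] {F : Type*} [Field F] {P : F → Prop} (R : Rep G F P)

lemma Rep.det_ne (g : G) : (R.r g).det ≠ 0 := R.P0 _ (R.hP g)

/-- Elements represented by the same line differ by a central element. -/
lemma Rep.same {g h : G} {c : F} (hc : R.r g = c • R.r h) : ∃ z ∈ center G, g = h * z := by
  refine ⟨h⁻¹ * g, ?_, by group⟩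
  rw [R.hcen]
  obtain ⟨c1, h1, e1⟩ := R.hmul h⁻¹ g
  obtain ⟨c2, h2, e2⟩ := R.hmul h⁻¹ h
  obtain ⟨c3, e3⟩ := (R.hcen (h⁻¹ * h)).1 (by simp)
  refine ⟨c1⁻¹ * (c * (c2 * c3)), ?_⟩
  rw [mul_smul, mul_smul, mul_smul, ← e3, ← e2, ← mul_smul_comm, ← hc, e1, smul_smul, inv_mul_cancel₀ h1, one_smul]

lemma Rep.comm {g h : G} (e : g * h = h * g) :
    R.r g * R.r h = R.r h * R.r g ∨ R.r g * R.r h = -(R.r h * R.r g) := by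
  obtain ⟨c1, h1, e1⟩ := R.hmul g h
  obtain ⟨c2, h2, e2⟩ := R.hmul h g
  have : R.r g * R.r h = (c1 * c2⁻¹) • (R.r h * R.r g) := by
    rw [e1, e2, e, smul_smul, mul_assoc, inv_mul_cancel₀ h2, mul_one]
  rcases comm_scalar _ _ _ (R.det_ne g) (R.det_ne h) this with h | h
  · left; rw [this, h, one_smul]
  · right; rw [this, h, neg_smul, one_smul]

lemma Rep.inv_rep (g : G) : ∃ c : F, R.r g⁻¹ = c • (R.r g).adjugate := by
  obtain ⟨c2, h2, e2⟩ := R.hmul g⁻¹ g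
  obtain ⟨c3, e3⟩ := (R.hcen (g⁻¹ * g)).1 (by simp)
  refine ⟨(R.r g).det⁻¹ * (c2 * c3), ?_⟩
  have := congrArg (· * (R.r g).adjugate) e2
  simp only [mul_assoc, mul_adjugate, e3] at this
  rw [mul_smul, mul_smul]
  simp at this
  rw [← this, smul_smul, inv_mul_cancel₀ (R.det_ne g), one_smul]

/-- The preimage of the torus (or unipotent group) determined by `M`. -/
def Rep.tor (M : Matrix (Fin 2) (Fin 2) F) : Subgroup G where
  carrier := {g | ∃ a b : F, R.r g = a • (1 : Matrix (Fin 2) (Fin 2) F) + b • M}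
  one_mem' := by
    obtain ⟨c, hc⟩ := (R.hcen 1).1 (one_mem _)
    exact ⟨c, 0, by simp [hc]⟩
  mul_mem' := by
    rintro g h ⟨a, b, hg⟩ ⟨a', b', hh⟩
    obtain ⟨c, h0, hc⟩ := R.hmul g h
    refine ⟨c⁻¹ * (a * a' - b * b' * M.det), c⁻¹ * (a * b' + a' * b + b * b' * M.trace), ?_⟩
    rw [mul_smul, mul_smul, ← smul_add, ← mul_lin, ← hg, ← hh, hc, smul_smul, inv_mul_cancel₀ h0, one_smul]
  inv_mem' := by
    rintro g ⟨a, b, hg⟩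
    obtain ⟨c, hc⟩ := R.inv_rep g
    refine ⟨c * (a + b * M.trace), -(c * b), ?_⟩
    rw [hc, hg]
    apply mat_ext <;> simp [adjugate_fin_two, trace_fin_two] <;> ring

lemma Rep.mem_tor {M : Matrix (Fin 2) (Fin 2) F} {g : G} :
    g ∈ R.tor M ↔ ∃ a b : F, R.r g = a • (1 : Matrix (Fin 2) (Fin 2) F) + b • M := Iff.rfl

lemma Rep.tor_lin (M : Matrix (Fin 2) (Fin 2) F) (a b : F) (hb : b ≠ 0) :
    R.tor (a • (1 : Matrix (Fin 2) (Fin 2) F) + b • M) = R.tor M := by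
  ext g
  rw [R.mem_tor, R.mem_tor]
  constructor
  · rintro ⟨c, d, h⟩
    exact ⟨c + d * a, d * b, by rw [h, smul_add, smul_smul, smul_smul, add_smul, add_assoc]⟩
  · rintro ⟨c, d, h⟩
    refine ⟨c - d / b * a, d / b, ?_⟩
    rw [h, smul_add, smul_smul, smul_smul, sub_smul, div_mul_cancel₀ _ hb]
    abel

lemma Rep.center_le_tor (M : Matrix (Fin 2) (Fin 2) F) : center G ≤ R.tor M := by
  intro g hg
  obtain ⟨c, hc⟩ := (R.hcen g).1 hg
  exact ⟨c, 0, by simp [hc]⟩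

lemma mem_cent {x g : G} : g ∈ centralizer ({x} : Set G) ↔ x * g = g * x := by
  rw [mem_centralizer_singleton_iff, eq_comm]

lemma Rep.cent_le_tor {x : G} (hx : x ∉ center G)
    (h : (R.r x).trace ≠ 0 ∨ (2 : F) = 0) : centralizer ({x} : Set G) ≤ R.tor (R.r x) := by
  intro g hg
  have hg := mem_cent |>.1 hg
  apply centralizer_mat _ _ _ (by rwa [R.hcen] at hx)
  rcases R.comm hg with e | e
  · exact e.symm
  · by_cases h2 : (2 : F) = 0
    · rw [e]
      have : ∀ A : Matrix (Fin 2) (Fin 2) F, A = -A := by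
        intro A
        have : (2 : F) • A = 0 := by rw [h2, zero_smul]
        rw [two_smul] at this
        exact eq_neg_of_add_eq_zero_left this
      exact this _
    · exfalso
      have h := h.resolve_right h2
      apply h
      apply anti_trace _ _ (R.det_ne g) h2
      rw [e, neg_neg]

/-- The preimage of a semisimple torus is abelian. -/
lemma Rep.tor_comm [Finite G] (M : Matrix (Fin 2) (Fin 2) F) (hM : M.trace ^ 2 - 4 * M.det ≠ 0)
    {g h : G} (hg : g ∈ R.tor M) (hh : h ∈ R.tor M) : g * h = h * g := by
  have hns : ¬ ∃ c : F, M = c • (1 : Matrix (Fin 2) (Fin 2) F) := by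
    rintro ⟨c, rfl⟩
    apply hM
    simp [trace_fin_two, det_fin_two]; ring
  let K := AlgebraicClosure F
  obtain ⟨l, hl⟩ : ∃ l : K, l ^ 2 - algebraMap F K M.trace * l + algebraMap F K M.det = 0 := by
    open Polynomial in
    obtain ⟨l, hl⟩ := IsAlgClosed.exists_root
      (X ^ 2 - C (algebraMap F K M.trace) * X + C (algebraMap F K M.det) : K[X]) (by
        have : (X ^ 2 - C (algebraMap F K M.trace) * X + C (algebraMap F K M.det) : K[X]).degree = 2 := by
          compute_degree!
        rw [this]; decide)
    exact ⟨l, by simpa using hl⟩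
  set T := algebraMap F K M.trace with hT
  set D := algebraMap F K M.det with hD
  have hne : l - (T - l) ≠ 0 := by
    intro h0
    apply hM
    apply (algebraMap F K).injective
    have : T ^ 2 - 4 * D = (l - (T - l)) ^ 2 := by linear_combination -4 * hl
    rw [map_sub, map_mul, map_pow, map_zero]
    rw [← hT, ← hD]
    simp only [map_ofNat]
    rw [this, h0]; simp
  choose a b hab using (fun g : R.tor M => g.2)
  have hnz : ∀ g : R.tor M, (algebraMap F K (a g) + algebraMap F K (b g) * l) *
      (algebraMap F K (a g) + algebraMap F K (b g) * (T - l)) ≠ 0 := by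
    intro g
    have h1 := R.det_ne g
    rw [hab, det_lin] at h1
    have h2 := (map_ne_zero (algebraMap F K)).2 h1
    simp only [map_add, map_mul, map_pow] at h2
    rw [← hT, ← hD] at h2
    convert h2 using 1
    linear_combination -(algebraMap F K (b g)) ^ 2 * hl
  have hn1 := fun g => left_ne_zero_of_mul (hnz g)
  have hn2 := fun g => right_ne_zero_of_mul (hnz g)
  have hm : ∀ g h : R.tor M, ∃ c : F, c ≠ 0 ∧ a g * a h - b g * b h * M.det = c * a (g * h) ∧
      a g * b h + a h * b g + b g * b h * M.trace = c * b (g * h) := by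
    intro g h
    obtain ⟨c, h0, hc⟩ := R.hmul g h
    refine ⟨c, h0, lin_unique M hns _ _ _ _ ?_⟩
    rw [← mul_lin, ← hab, ← hab, hc, mul_smul, mul_smul, ← smul_add, ← hab]
    rfl
  let ψ : R.tor M →* Kˣ := MonoidHom.mk' (fun g => Units.mk0 _ (hn1 g) / Units.mk0 _ (hn2 g)) (by
    intro g h
    obtain ⟨c, h0, e1, e2⟩ := hm g h
    have e1 := congrArg (algebraMap F K) e1
    have e2 := congrArg (algebraMap F K) e2
    simp only [map_add, map_sub, map_mul] at e1 e2
    rw [← hD] at e1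
    rw [← hT] at e2
    have h0' := (map_ne_zero (algebraMap F K)).2 h0
    have hg := hn2 g
    have hh := hn2 h
    have hgh := hn2 (g * h)
    ext
    simp only [Units.val_div_eq_div_val, Units.val_mul, Units.val_mk0]
    have k1 : algebraMap F K c * (algebraMap F K (a (g * h)) + algebraMap F K (b (g * h)) * l) =
      (algebraMap F K (a g) + algebraMap F K (b g) * l) * (algebraMap F K (a h) + algebraMap F K (b h) * l) := by
      linear_combination -e1 - l * e2 - (algebraMap F K (b g)) * (algebraMap F K (b h)) * hl
    have k2 : algebraMap F K c * (algebraMap F K (a (g * h)) + algebraMap F K (b (g * h)) * (T - l)) =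
      (algebraMap F K (a g) + algebraMap F K (b g) * (T - l)) * (algebraMap F K (a h) + algebraMap F K (b h) * (T - l)) := by
      linear_combination -e1 - (T - l) * e2 - (algebraMap F K (b g)) * (algebraMap F K (b h)) * hl
    rw [div_mul_div_comm, ← k1, ← k2, mul_div_mul_left _ _ h0'])
  have hker : ψ.ker ≤ center (R.tor M) := by
    intro g hg
    have h1 : Units.mk0 _ (hn1 g) / Units.mk0 _ (hn2 g) = 1 := hg
    rw [div_eq_one, Units.mk0_inj] at h1
    have h2 : algebraMap F K (b g) * (l - (T - l)) = 0 := by linear_combination h1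
    have h3 : b g = 0 := by simpa [hne] using h2
    have h4 : (g : G) ∈ center G := by
      rw [R.hcen]; exact ⟨a g, by rw [hab, h3]; simp⟩
    rw [mem_center_iff] at h4 ⊢
    intro k
    exact Subtype.ext (h4 k)
  have : Finite ψ.range := Set.finite_range ψ
  have := MonoidHom.isMulCommutative_of_isCyclic_of_ker_le_center ψ.rangeRestrict
    (by rwa [MonoidHom.ker_rangeRestrict])
  exact congrArg Subtype.val (mul_comm' (⟨g, hg⟩ : R.tor M) ⟨h, hh⟩)

lemma Rep.cent_le_of_comm {M : Matrix (Fin 2) (Fin 2) F}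
    (hc : ∀ g ∈ R.tor M, ∀ h ∈ R.tor M, g * h = h * g) {x : G} (hx : x ∈ R.tor M) :
    R.tor M ≤ centralizer ({x} : Set G) := by
  intro g hg
  exact mem_cent |>.2 (hc _ hx _ hg)

end rep

section uni
open scoped commutatorElement
variable {G : Type*} [Group G] {F : Type*} [Field F] {P : F → Prop} (R : Rep G F P)

/-- `g` is represented by the unipotent matrix `1 + u N`. -/
def Rep.Uni (N : Matrix (Fin 2) (Fin 2) F) (g : G) (u : F) : Prop :=
  ∃ a : F, a ≠ 0 ∧ R.r g = a • ((1 : Matrix (Fin 2) (Fin 2) F) + u • N)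

variable {R} {N : Matrix (Fin 2) (Fin 2) F}

lemma Rep.Uni.mem {g : G} {u : F} (h : R.Uni N g u) : g ∈ R.tor N := by
  obtain ⟨a, -, h⟩ := h
  exact ⟨a, a * u, by rw [h, smul_add, smul_smul]⟩

lemma Rep.uni_of_mem (ht : N.trace = 0) (hd : N.det = 0) {g : G} (h : g ∈ R.tor N) :
    ∃ u, R.Uni N g u := by
  obtain ⟨a, b, h⟩ := h
  have ha : a ≠ 0 := by
    have := R.det_ne g
    rw [h, det_lin, ht, hd] at this
    rintro rfl
    simp at this
  exact ⟨b / a, a, ha, by rw [h, smul_add, smul_smul, mul_div_cancel₀ _ ha]⟩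

lemma Rep.Uni.mul (ht : N.trace = 0) (hd : N.det = 0) {g h : G} {u v : F} (hg : R.Uni N g u)
    (hh : R.Uni N h v) : R.Uni N (g * h) (u + v) := by
  obtain ⟨a, a0, hg⟩ := hg
  obtain ⟨b, b0, hh⟩ := hh
  obtain ⟨c, c0, hc⟩ := R.hmul g h
  refine ⟨c⁻¹ * (a * b), mul_ne_zero (inv_ne_zero c0) (mul_ne_zero a0 b0), ?_⟩
  have e := mul_lin N 1 u 1 v
  simp only [ht, hd, one_smul, mul_zero, mul_one, sub_zero, add_zero, one_mul] at e
  have : R.r (g * h) = c⁻¹ • (R.r g * R.r h) := by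
    rw [hc, smul_smul, inv_mul_cancel₀ c0, one_smul]
  rw [this, hg, hh, smul_mul_smul_comm, e, smul_smul, add_comm u v]

lemma Rep.uni_surj (R : Rep G F P) (ht : N.trace = 0) (hd : N.det = 0) (u : F) : ∃ g, R.Uni N g u := by
  have e := det_lin N 1 u
  simp only [ht, hd, one_smul, mul_zero, add_zero, one_pow] at e
  obtain ⟨g, c, c0, h⟩ := R.hsur (1 + u • N) (by rw [e]; exact R.P1)
  exact ⟨g, c, c0, h⟩

lemma Rep.Uni.same {g h : G} {u : F} (hg : R.Uni N g u)
    (hh : R.Uni N h u) : ∃ z ∈ center G, g = h * z := by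
  obtain ⟨a, a0, hg⟩ := hg
  obtain ⟨b, b0, hh⟩ := hh
  apply R.same (c := a * b⁻¹)
  rw [hg, hh, smul_smul, mul_assoc, inv_mul_cancel₀ b0, mul_one]

lemma Rep.Uni.cen {g : G} (hg : R.Uni N g 0) : g ∈ center G := by
  obtain ⟨a, a0, hg⟩ := hg
  rw [R.hcen]; exact ⟨a, by simpa using hg⟩

lemma nil_nonscalar (hN : N ≠ 0) (hd : N.det = 0) :
    ¬ ∃ c : F, N = c • (1 : Matrix (Fin 2) (Fin 2) F) := by
  rintro ⟨c, rfl⟩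
  have : c = 0 := by simpa using hd
  simp [this] at hN

lemma Rep.Uni.unique (hN : N ≠ 0) (hd : N.det = 0) {g : G} {u v : F}
    (hg : R.Uni N g u) (hh : R.Uni N g v) : u = v := by
  obtain ⟨a, a0, hg⟩ := hg
  obtain ⟨b, b0, hh⟩ := hh
  rw [hg, smul_add, smul_add, smul_smul, smul_smul] at hh
  obtain ⟨h1, h2⟩ := lin_unique N (nil_nonscalar hN hd) _ _ _ _ hh
  subst h1
  exact mul_left_cancel₀ a0 h2

lemma Rep.uni_cen (hN : N ≠ 0) (ht : N.trace = 0) (hd : N.det = 0) {g : G} (hg : g ∈ center G) :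
    R.Uni N g 0 := by
  obtain ⟨u, hu⟩ := R.uni_of_mem ht hd (R.center_le_tor N hg)
  obtain ⟨c, hc⟩ := (R.hcen g).1 hg
  have c0 : c ≠ 0 := by
    rintro rfl
    have := R.det_ne g
    rw [hc] at this
    simp at this
  exact ⟨c, c0, by simp [hc]⟩

lemma Rep.Uni.inv (hN : N ≠ 0) (ht : N.trace = 0) (hd : N.det = 0) {g : G} {u : F}
    (hg : R.Uni N g u) : R.Uni N g⁻¹ (-u) := by
  obtain ⟨v, hv⟩ := R.uni_of_mem ht hd (inv_mem hg.mem)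
  have h1 := hg.mul ht hd hv
  rw [mul_inv_cancel] at h1
  have h2 := h1.unique hN hd (Rep.uni_cen hN ht hd (one_mem _))
  have : v = -u := by linear_combination h2
  rwa [← this]

lemma Rep.Uni.npow (hN : N ≠ 0) (ht : N.trace = 0) (hd : N.det = 0) {g : G} {u : F}
    (hg : R.Uni N g u) (i : ℕ) : R.Uni N (g ^ i) (i * u) := by
  induction i with
  | zero => simpa using Rep.uni_cen hN ht hd (one_mem _)
  | succ k ih =>
    have := ih.mul ht hd hg
    rw [pow_succ]
    convert this using 1
    push_cast; ring

lemma Rep.Uni.zpow (hN : N ≠ 0) (ht : N.trace = 0) (hd : N.det = 0) {g : G} {u : F}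
    (hg : R.Uni N g u) (i : ℤ) : R.Uni N (g ^ i) (i * u) := by
  obtain ⟨k, rfl | rfl⟩ := i.eq_nat_or_neg
  · simpa using hg.npow hN ht hd k
  · simpa using (hg.npow hN ht hd k).inv hN ht hd

lemma Rep.uni_conj (R : Rep G F P) (ht : N.trace = 0) (hd : N.det = 0) (t : F) (h0 : t ≠ 0) :
    ∃ d : G, ∀ g u, R.Uni N g u → R.Uni N (d * g * d⁻¹) (t ^ 2 * u) := by
  obtain ⟨D, hD, hDN⟩ := exists_diag N ht hd t h0
  obtain ⟨d, c, c0, hdc⟩ := R.hsur D (by rw [hD]; exact R.P1)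
  refine ⟨d, fun g u ⟨a, a0, hg⟩ => ?_⟩
  obtain ⟨c1, h1, e1⟩ := R.hmul d g
  obtain ⟨c2, h2, e2⟩ := R.hmul (d * g * d⁻¹) d
  rw [inv_mul_cancel_right] at e2
  have hU : IsUnit D := by rw [isUnit_iff_isUnit_det, hD]; exact isUnit_one
  refine ⟨c2 * c1⁻¹ * a, by simp [h1, h2, a0], ?_⟩
  have k1 : R.r (d * g) = c1⁻¹ • (R.r d * R.r g) := by
    rw [e1, smul_smul, inv_mul_cancel₀ h1, one_smul]
  have k2 : D * (1 + u • N) = (1 + (t ^ 2 * u) • N) * D := by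
    rw [mul_add, add_mul, mul_smul_comm, hDN, smul_mul_assoc, smul_smul, mul_one, one_mul, mul_comm u]
  rw [k1, hg, hdc, smul_mul_smul_comm, k2, mul_smul_comm, smul_smul, smul_smul] at e2
  have e3 := congrArg (c⁻¹ • ·) e2
  simp only [smul_smul] at e3
  rw [inv_mul_cancel₀ c0, one_smul] at e3
  apply hU.mul_right_cancel
  rw [e3, smul_mul_assoc]
  congr 1
  field_simp

lemma comm_congr {g h y z : G} (hy : y ∈ center G) (hz : z ∈ center G) :
    ⁅g * y, h * z⁆ = ⁅g, h⁆ := by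
  rw [mem_center_iff] at hy hz
  rw [commutatorElement_def, commutatorElement_def]
  have e1 : g * y * (h * z) = g * h * (y * z) := by
    rw [mul_assoc, mul_assoc, ← mul_assoc y, ← hy h]; group
  have e2 : (g * y)⁻¹ * (h * z)⁻¹ = (y * z)⁻¹ * (g⁻¹ * h⁻¹) := by
    rw [← _root_.mul_inv_rev, ← _root_.mul_inv_rev, ← _root_.mul_inv_rev]
    congr 1
    rw [mul_assoc, ← mul_assoc z, ← hz g, mul_assoc, mul_assoc, hz y]
  rw [mul_assoc, e2, e1]; group

lemma Rep.tor_comm_uni (R : Rep G F P) (ht : N.trace = 0) (hd : N.det = 0)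
    (hex : ∃ a b : F, a ≠ 0 ∧ b ≠ 0 ∧ 1 + a ^ 2 = b ^ 2 ∧ 1 + a ^ 2 + a ^ 4 ≠ 0)
    {g h : G} (hg : g ∈ R.tor N) (hh : h ∈ R.tor N) : g * h = h * g := by
  choose s hs using R.uni_surj (N := N) ht hd
  have hB : ∀ {g h : G} {u v : F}, R.Uni N g u → R.Uni N h v → ⁅g, h⁆ = ⁅s u, s v⁆ := by
    intro g h u v hg hh
    obtain ⟨y, hy, rfl⟩ := hg.same (hs u)
    obtain ⟨z, hz, rfl⟩ := hh.same (hs v)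
    exact comm_congr hy hz
  have hcen : ∀ u v, ⁅s u, s v⁆ ∈ center G := by
    intro u v
    have h1 := (hs u).mul ht hd (hs v)
    have h2 := (hs v).mul ht hd (hs u)
    rw [add_comm] at h2
    obtain ⟨z, hz, e⟩ := h1.same h2
    have : ⁅s u, s v⁆ = z := by
      rw [commutatorElement_def, e, (mem_center_iff.1 hz _)]; group
    rwa [this]
  obtain ⟨u, hu⟩ := R.uni_of_mem ht hd hg
  obtain ⟨v, hv⟩ := R.uni_of_mem ht hd hh
  rw [← commutatorElement_eq_one_iff_mul_comm, hB hu hv]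
  obtain ⟨a, b, ha, hb, hab, hk⟩ := hex
  refine form_trivial (fun u v => ⁅s u, s v⁆) ?_ ?_ ?_ a b ha hb hab hk u v
  · intro u u' v
    have h1 := hB ((hs u).mul ht hd (hs u')) (hs v)
    change ⁅s (u + u'), s v⁆ = ⁅s u, s v⁆ * ⁅s u', s v⁆
    rw [← h1]
    have : ⁅s u * s u', s v⁆ = s u * ⁅s u', s v⁆ * (s u)⁻¹ * ⁅s u, s v⁆ := by
      simp only [commutatorElement_def]; group
    rw [this, mem_center_iff.1 (hcen u' v), mul_inv_cancel_right, mem_center_iff.1 (hcen u v)]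
  · intro u v v'
    have h1 := hB (hs u) ((hs v).mul ht hd (hs v'))
    change ⁅s u, s (v + v')⁆ = ⁅s u, s v⁆ * ⁅s u, s v'⁆
    rw [← h1]
    have : ⁅s u, s v * s v'⁆ = ⁅s u, s v⁆ * (s v * ⁅s u, s v'⁆ * (s v)⁻¹) := by
      simp only [commutatorElement_def]; group
    rw [this, mem_center_iff.1 (hcen u v'), mul_inv_cancel_right]
  · intro t h0 u v
    obtain ⟨d, hconj⟩ := R.uni_conj ht hd t h0
    have h1 := hB (hconj _ _ (hs u)) (hconj _ _ (hs v))
    change ⁅s (t ^ 2 * u), s (t ^ 2 * v)⁆ = ⁅s u, s v⁆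
    rw [← h1]
    have : ⁅d * s u * d⁻¹, d * s v * d⁻¹⁆ = d * ⁅s u, s v⁆ * d⁻¹ := by
      simp only [commutatorElement_def]; group
    rw [this, mem_center_iff.1 (hcen u v), mul_inv_cancel_right]

lemma Rep.small_uni [Fintype F] (R : Rep G F P) (hN : N ≠ 0) (ht : N.trace = 0) (hd : N.det = 0)
    {p n : ℕ} (hp : p.Prime) (hn : 1 ≤ n) (hF : Nat.card F = p ^ n) (hn2 : n ≤ 2) {x z : G}
    (hx : x ∉ center G) (hz : z ∉ center G) (hzt : centralizer ({z} : Set G) ≤ R.tor N)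
    (hxz : centralizer ({x} : Set G) ≤ centralizer ({z} : Set G)) :
    centralizer ({x} : Set G) = centralizer ({z} : Set G) := by
  have hpF : (p : F) = 0 := by
    have : ((Nat.card F : ℕ) : F) = 0 := by
      rw [Nat.card_eq_fintype_card]; exact Nat.cast_card_eq_zero F
    rw [hF, Nat.cast_pow] at this
    exact pow_eq_zero_iff (by omega) |>.1 this
  refine le_antisymm hxz ?_
  intro g hg
  have hxC : x ∈ centralizer ({z} : Set G) := hxz (mem_cent.2 rfl)
  have hzC : z ∈ centralizer ({z} : Set G) := mem_cent.2 rfl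
  obtain ⟨u, hu⟩ := R.uni_of_mem ht hd (hzt hxC)
  obtain ⟨w, hw⟩ := R.uni_of_mem ht hd (hzt hzC)
  obtain ⟨v, hv⟩ := R.uni_of_mem ht hd (hzt hg)
  have u0 : u ≠ 0 := by rintro rfl; exact hx hu.cen
  have w0 : w ≠ 0 := by rintro rfl; exact hz hw.cen
  have hzx : Commute z x := mem_cent.1 hxC
  have hzg : Commute z g := mem_cent.1 hg
  rw [mem_cent]
  change Commute x g
  have cenC : ∀ {c : G}, c ∈ center G → ∀ k, Commute k c := fun hc k => mem_center_iff.1 hc k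
  -- an element proportional to another one
  have prop : ∀ {a b : G} {ua ub : F} (i : ℤ), R.Uni N a ua → R.Uni N b ub → ub = i * ua →
      ∀ k, Commute k a → Commute k b := by
    rintro a b ua ub i ha hb rfl k hk
    obtain ⟨c, hc, rfl⟩ := hb.same (ha.zpow hN ht hd i)
    exact (hk.zpow_right i).mul_right (cenC hc k)
  have invp : ∀ j : ℤ, ¬ (p : ℤ) ∣ j → ∃ k : ℤ, (k : F) * j = 1 := by
    intro j hj
    have hc : IsCoprime (p : ℤ) j := (Prime.coprime_iff_not_dvd (Nat.prime_iff_prime_int.1 hp)).2 hj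
    obtain ⟨l, k, e⟩ := hc
    refine ⟨k, ?_⟩
    have := congrArg (Int.cast : ℤ → F) e
    push_cast at this
    rw [hpF] at this
    simpa using this
  by_contra hxg
  have hv1 : v ∉ AddSubgroup.zmultiples u := by
    rintro ⟨i, hi⟩
    refine hxg (prop i hu hv ?_ x (Commute.refl x))
    rw [← hi]; simp
  have : Fact p.Prime := ⟨hp⟩
  have hcard : Nat.card (AddSubgroup.zmultiples u) = p := by
    rw [Nat.card_zmultiples]
    exact addOrderOf_eq_prime (by rw [nsmul_eq_mul, hpF, zero_mul]) u0
  have htop : AddSubgroup.zmultiples u ⊔ AddSubgroup.zmultiples v = ⊤ := by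
    set S := AddSubgroup.zmultiples u ⊔ AddSubgroup.zmultiples v with hS
    have hle : AddSubgroup.zmultiples u ≤ S := le_sup_left
    have hdv : Nat.card S ∣ p ^ n := hF ▸ AddSubgroup.card_addSubgroup_dvd_card S
    obtain ⟨k, hk, hSk⟩ := (Nat.dvd_prime_pow hp).1 hdv
    have hk2 : 2 ≤ k := by
      by_contra hlt
      have : Nat.card S ≤ Nat.card (AddSubgroup.zmultiples u) := by
        rw [hcard, hSk]
        calc p ^ k ≤ p ^ 1 := Nat.pow_le_pow_right hp.pos (by omega)
          _ = p := pow_one p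
      have := AddSubgroup.eq_of_le_of_card_ge hle this
      apply hv1
      rw [this]
      exact (le_sup_right : _ ≤ S) (AddSubgroup.mem_zmultiples v)
    apply AddSubgroup.eq_top_of_card_eq
    rw [hSk, hF]
    congr 1
    omega
  obtain ⟨y1, ⟨i, rfl⟩, y2, ⟨j, rfl⟩, e⟩ := AddSubgroup.mem_sup.1 (htop ▸ AddSubgroup.mem_top w)
  simp only [zsmul_eq_mul] at e
  by_cases hj : (p : ℤ) ∣ j
  · have hj0 : (j : F) = 0 := by
      obtain ⟨m, rfl⟩ := hj
      simp [hpF]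
    rw [hj0, zero_mul, add_zero] at e
    by_cases hi : (p : ℤ) ∣ i
    · obtain ⟨m, rfl⟩ := hi
      apply w0
      rw [← e]; simp [hpF]
    · obtain ⟨k, hk⟩ := invp i hi
      refine hxg (prop k hw hu ?_ g hzg.symm).symm
      rw [← e, ← mul_assoc, hk, one_mul]
  · obtain ⟨k, hk⟩ := invp j hj
    apply hxg
    -- `z * x ^ (-i)` is proportional to `g`
    have h1 := hw.mul ht hd (hu.zpow hN ht hd (-i))
    refine prop k h1 hv ?_ x (hzx.symm.mul_right ((Commute.refl x).zpow_right _))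
    rw [← e]
    push_cast
    linear_combination -v * hk

end uni

section main
variable {G : Type*} [Group G] {F : Type*} [Field F] {P : F → Prop}

/-- Every traceless matrix has a non-trivial torus. -/
def EE (P : F → Prop) : Prop := ∀ M : Matrix (Fin 2) (Fin 2) F, P M.det → M.trace = 0 →
  ∃ a b : F, a ≠ 0 ∧ b ≠ 0 ∧ P (a • (1 : Matrix (Fin 2) (Fin 2) F) + b • M).det

/-- No traceless matrix has a non-trivial torus. -/
def NE (P : F → Prop) : Prop := ∀ M : Matrix (Fin 2) (Fin 2) F, P M.det → M.trace = 0 →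
  ∀ a b : F, P (a • (1 : Matrix (Fin 2) (Fin 2) F) + b • M).det → a = 0 ∨ b = 0

lemma Rep.exists_nilp [Fintype F] (M : Matrix (Fin 2) (Fin 2) F)
    (hM : ¬ ∃ c : F, M = c • (1 : Matrix (Fin 2) (Fin 2) F)) (hdisc : M.trace ^ 2 - 4 * M.det = 0) :
    ∃ (l : F) (N : Matrix (Fin 2) (Fin 2) F), N ≠ 0 ∧ N.trace = 0 ∧ N.det = 0 ∧
      M = l • (1 : Matrix (Fin 2) (Fin 2) F) + (1 : F) • N := by
  obtain ⟨l, h1, h2⟩ : ∃ l : F, M.trace - 2 * l = 0 ∧ M.det - l * M.trace + l ^ 2 = 0 := by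
    by_cases h2 : (2 : F) = 0
    · have hc : ringChar F = 2 := by
        have hdv : ringChar F ∣ 2 := by
          rw [← ringChar.spec]; exact_mod_cast h2
        rcases (Nat.dvd_prime Nat.prime_two).1 hdv with h | h
        · exact absurd h (CharP.ringChar_ne_one)
        · exact h
      obtain ⟨l, hl⟩ := FiniteField.isSquare_of_char_two hc M.det
      have ht : M.trace = 0 := by
        have : M.trace ^ 2 = 0 := by linear_combination hdisc + 2 * M.det * h2
        simpa using this
      refine ⟨l, by rw [ht, h2]; ring, ?_⟩
      rw [ht]; linear_combination hl + l ^ 2 * h2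
    · refine ⟨M.trace / 2, by field_simp; ring, ?_⟩
      field_simp
      linear_combination -hdisc
  refine ⟨l, M - l • 1, ?_, ?_, ?_, ?_⟩
  · intro h
    exact hM ⟨l, sub_eq_zero.1 h⟩
  · rw [trace_sub, trace_smul, trace_one]; simp; linear_combination h1
  · rw [trace_fin_two, det_fin_two] at h2
    simp [det_fin_two]; linear_combination h2
  · rw [one_smul]; abel

lemma Rep.anti_case (R : Rep G F P) {x z : G} (h : x * z = z * x)
    (hz : z ∉ center G) (hxt : x ∉ R.tor (R.r z)) : R.r x * R.r z = -(R.r z * R.r x) := by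
  refine (R.comm h).resolve_left fun h => hxt ?_
  exact centralizer_mat _ _ h (by rwa [R.hcen] at hz)

lemma Rep.self_mem (R : Rep G F P) (z : G) : z ∈ R.tor (R.r z) := ⟨0, 1, by simp⟩

lemma Rep.claim [Finite G] [Fintype F] (R : Rep G F P) {p n : ℕ} (hp : p.Prime) (hn : 1 ≤ n)
    (hF : Nat.card F = p ^ n) (hE : (2 : F) ≠ 0 → EE P ∨ NE P) {z : G} (hz : z ∉ center G) :
    ∃ D : Subgroup G, ∀ x, x ∉ center G → IsMinCentralizer x →
      centralizer ({x} : Set G) ≤ centralizer ({z} : Set G) → centralizer ({x} : Set G) = D := by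
  have self : ∀ x : G, x ∈ centralizer ({x} : Set G) := fun x => mem_cent.2 rfl
  have hns : ¬ ∃ c : F, R.r z = c • (1 : Matrix (Fin 2) (Fin 2) F) := by rwa [R.hcen] at hz
  set M := R.r z with hM
  by_cases hdisc : M.trace ^ 2 - 4 * M.det = 0
  · -- unipotent case
    have htr : M.trace ≠ 0 ∨ (2 : F) = 0 := by
      by_contra! hcon
      obtain ⟨h1, h2⟩ := hcon
      rw [h1] at hdisc
      have h3 : (2 : F) * 2 * M.det = 0 := by linear_combination -hdisc
      simp [h2, R.det_ne z, hM] at h3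
    obtain ⟨l, N, hN, ht, hd, hMN⟩ := Rep.exists_nilp M hns hdisc
    have hle : centralizer ({z} : Set G) ≤ R.tor N := by
      rw [← R.tor_lin N l 1 one_ne_zero, ← hMN]
      exact R.cent_le_tor hz htr
    by_cases hn2 : n ≤ 2
    · exact ⟨_, fun x hx _ hxz => R.small_uni hN ht hd hp hn hF hn2 hx hz hle hxz⟩
    · have hcard8 : 8 ≤ Nat.card F := by
        rw [hF]
        calc 2 ^ 3 ≤ p ^ 3 := Nat.pow_le_pow_left hp.two_le 3
          _ ≤ p ^ n := Nat.pow_le_pow_right hp.pos (by omega)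
      have hex := exists_sq (F := F) (fun h2 => by
        have h3 : 3 ≤ p := by
          rcases hp.two_le.lt_or_eq with h | h
          · exact h
          · exfalso
            apply h2
            have : ((Nat.card F : ℕ) : F) = 0 := by
              rw [Nat.card_eq_fintype_card]; exact Nat.cast_card_eq_zero F
            rw [hF, ← h, Nat.cast_pow] at this
            have := pow_eq_zero_iff (by omega) |>.1 this
            exact_mod_cast this
        have : 27 ≤ Nat.card F := by
          rw [hF]
          calc 3 ^ 3 ≤ p ^ 3 := Nat.pow_le_pow_left h3 3
            _ ≤ p ^ n := Nat.pow_le_pow_right hp.pos (by omega)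
        omega) (by omega)
      refine ⟨R.tor N, fun x hx _ hxz => le_antisymm (hxz.trans hle) ?_⟩
      exact R.cent_le_of_comm (fun g hg h hh => R.tor_comm_uni ht hd hex hg hh) (hle (hxz (self x)))
  · have hcomm : ∀ g ∈ R.tor M, ∀ h ∈ R.tor M, g * h = h * g :=
      fun g hg h hh => R.tor_comm M hdisc hg hh
    by_cases htr : M.trace ≠ 0 ∨ (2 : F) = 0
    · have hle := R.cent_le_tor hz htr
      exact ⟨R.tor M, fun x hx _ hxz => le_antisymm (hxz.trans hle)
        (R.cent_le_of_comm hcomm (hle (hxz (self x))))⟩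
    · push Not at htr
      obtain ⟨htr, h2⟩ := htr
      rcases hE h2 with hE | hE
      · refine ⟨R.tor M, fun x hx hmin hxz => ?_⟩
        have hxC := hxz (self x)
        -- elements of the torus off the involution
        have gen : ∀ (t : G) (a b : F), a ≠ 0 → b ≠ 0 → R.r t = a • (1 : Matrix (Fin 2) (Fin 2) F) + b • M →
            t ∉ center G ∧ centralizer ({t} : Set G) = R.tor M := by
          intro t a b ha hb e
          have htc : t ∉ center G := by
            rw [R.hcen]
            rintro ⟨c, hc⟩
            have := lin_unique M hns a b c 0 (by rw [← e, hc]; simp)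
            exact hb this.2
          refine ⟨htc, le_antisymm ?_ (R.cent_le_of_comm hcomm ⟨a, b, e⟩)⟩
          rw [← R.tor_lin M a b hb, ← e]
          apply R.cent_le_tor htc
          left
          rw [e, trace_lin, htr]
          simp [h2, ha]
        by_cases hxt : x ∈ R.tor M
        · obtain ⟨a, b, e⟩ := hxt
          by_cases ha : a = 0
          · obtain ⟨a', b', ha', hb', hP⟩ := hE M (R.hP z) htr
            obtain ⟨t, c, c0, htc⟩ := R.hsur _ hP
            rw [smul_add, smul_smul, smul_smul] at htc
            obtain ⟨h3, h4⟩ := gen t _ _ (mul_ne_zero c0 ha') (mul_ne_zero c0 hb') htc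
            have h5 := R.cent_le_of_comm hcomm ⟨a, b, e⟩
            rw [← h4] at h5
            rw [← h4, hmin t h3 h5]
          · have hb : b ≠ 0 := by
              rintro rfl
              apply hx
              rw [R.hcen]
              exact ⟨a, by rw [e]; simp⟩
            exact (gen x a b ha hb e).2
        · exfalso
          have hanti := R.anti_case (mem_cent.1 hxC).symm hz hxt
          have htrx : (R.r x).trace = 0 := by
            apply anti_trace _ _ (R.det_ne z) h2
            rw [hanti, neg_neg]
          obtain ⟨a, b, ha, hb, hP⟩ := hE (R.r x) (R.hP x) htrx
          obtain ⟨t, c, c0, htc⟩ := R.hsur _ hP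
          have htx : t ∈ centralizer ({x} : Set G) := by
            have hdx : (R.r x).trace ^ 2 - 4 * (R.r x).det ≠ 0 := by
              rw [htrx]
              intro h
              have h3 : (2 : F) * 2 * (R.r x).det = 0 := by linear_combination -h
              simp [h2, R.det_ne x] at h3
            refine mem_cent.2 (R.tor_comm _ hdx (R.self_mem x) ⟨c * a, c * b, ?_⟩)
            rw [htc, smul_add, smul_smul, smul_smul]
          have htz := R.comm (mem_cent.1 (hxz htx)).symm
          have hMU : IsUnit M := by
            rw [isUnit_iff_isUnit_det]; exact (R.det_ne z).isUnit
          have hXU : IsUnit (R.r x) := by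
            rw [isUnit_iff_isUnit_det]; exact (R.det_ne x).isUnit
          have e1 : R.r t * M = c • (a • M - b • (M * R.r x)) := by
            rw [htc, smul_mul_assoc, add_mul, smul_mul_assoc, smul_mul_assoc, one_mul, hanti, smul_neg, sub_eq_add_neg]
          have e2 : M * R.r t = c • (a • M + b • (M * R.r x)) := by
            rw [htc, mul_smul_comm, mul_add, mul_smul_comm, mul_smul_comm, mul_one]
          rw [← hM, e1, e2] at htz
          rcases htz with h | h
          · have h' : (2 * (c * b)) • (M * R.r x) = 0 := by
              have := sub_eq_zero.2 h.symm
              rw [← this, two_mul, add_smul, mul_smul]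
              simp only [smul_add, smul_sub]; abel
            have hne : M * R.r x ≠ 0 := (hMU.mul hXU).ne_zero
            simp [h2, c0, hb, hne] at h'
          · have h' : (2 * (c * a)) • M = 0 := by
              have := add_eq_zero_iff_eq_neg.2 h
              rw [← this, two_mul, add_smul, mul_smul]
              simp only [smul_add, smul_sub]; abel
            simp [h2, c0, ha, hMU.ne_zero] at h'
      · refine ⟨centralizer ({z} : Set G), fun x hx _ hxz => le_antisymm hxz ?_⟩
        -- torus elements are trivial or proportional to `z`
        have tor2 : ∀ g ∈ R.tor M, g ∈ center G ∨ ∃ c ∈ center G, g = z * c := by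
          rintro g ⟨a, b, e⟩
          have hPg := R.hP g
          rw [e] at hPg
          rcases hE M (R.hP z) htr a b hPg with rfl | rfl
          · right
            exact R.same (c := b) (by rw [e]; simp [hM])
          · left
            rw [R.hcen]; exact ⟨a, by rw [e]; simp⟩
        intro g hg
        have cenC : ∀ {c : G}, c ∈ center G → ∀ k, Commute k c := fun hc k => mem_center_iff.1 hc k
        have hzx : Commute z x := mem_cent.1 (hxz (self x))
        have hzg : Commute z g := mem_cent.1 hg
        have key : ∀ {k : G}, Commute k z → ∀ g ∈ R.tor M, Commute k g := by
          intro k hk g hg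
          rcases tor2 g hg with h | ⟨c, hc, rfl⟩
          · exact cenC h k
          · exact hk.mul_right (cenC hc k)
        refine mem_cent.2 (?_ : Commute x g)
        by_cases hxt : x ∈ R.tor M
        · exact (key hzg.symm x hxt).symm
        by_cases hgt : g ∈ R.tor M
        · exact key hzx.symm g hgt
        have a1 := R.anti_case hzx.eq.symm hz hxt
        have a2 := R.anti_case hzg.eq.symm hz hgt
        obtain ⟨c, c0, hc⟩ := R.hmul x g
        have hxg : x * g ∈ R.tor M := by
          apply centralizer_mat _ _ _ hns
          have e1 : R.r x * R.r g * M = M * (R.r x * R.r g) := by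
            rw [mul_assoc, hM, a2, mul_neg, ← mul_assoc, a1, neg_mul, neg_neg, mul_assoc]
          rw [hc, smul_mul_assoc, mul_smul_comm] at e1
          exact smul_right_injective _ c0 e1
        have h5 : Commute x (x * g) := key hzx.symm _ hxg
        have h6 := (Commute.refl x).inv_right.mul_right h5
        rwa [inv_mul_cancel_left] at h6

theorem Rep.isFmin [Finite G] [Fintype F] (R : Rep G F P) {p n : ℕ} (hp : p.Prime) (hn : 1 ≤ n)
    (hF : Nat.card F = p ^ n) (hE : (2 : F) ≠ 0 → EE P ∨ NE P) : IsFminGroup G := by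
  intro x y hx hy hmx hmy hne
  apply le_antisymm
  · intro z hz
    by_contra hzc
    obtain ⟨⟨-, h1⟩, ⟨-, h2⟩⟩ := hz
    have le : ∀ {w : G}, z ∈ centralizer ((centralizer ({w} : Set G) : Subgroup G) : Set G) →
        centralizer ({w} : Set G) ≤ centralizer ({z} : Set G) := by
      intro w h g hg
      rw [mem_cent]
      exact (mem_centralizer_iff.1 h g hg).symm
    obtain ⟨D, hD⟩ := R.claim hp hn hF hE hzc
    exact hne ((hD x hx hmx (le h1)).trans (hD y hy hmy (le h2)).symm)
  · have : ∀ w : G, center G ≤ subgroupCenter (centralizer ({w} : Set G)) := by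
      intro w g hg
      exact ⟨center_le_centralizer _ hg, center_le_centralizer _ hg⟩
    exact le_inf (this x) (this y)

/-- Build the matrix representatives out of an isomorphism modulo centres. -/
noncomputable def Rep.ofIso {S : Type*} [Group S] (ι : S →* Matrix (Fin 2) (Fin 2) F)
    (P0 : ∀ d, P d → d ≠ 0) (P1 : P 1) (hP : ∀ s, P (ι s).det)
    (hc : ∀ s, s ∈ center S ↔ ∃ c : F, ι s = c • (1 : Matrix (Fin 2) (Fin 2) F))
    (hs : ∀ M, P M.det → ∃ s, ι s = M) (e : (G ⧸ center G) ≃* (S ⧸ center S)) : Rep G F P :=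
  have key : ∀ s t : S, (s : S ⧸ center S) = t → ∃ c : F, c ≠ 0 ∧ ι s = c • ι t := by
    intro s t h
    rw [eq_comm, QuotientGroup.eq] at h
    obtain ⟨c, hc⟩ := (hc _).1 h
    refine ⟨c, ?_, ?_⟩
    · rintro rfl
      have := P0 _ (hP (t⁻¹ * s))
      rw [hc] at this
      simp at this
    · have := map_mul ι t (t⁻¹ * s)
      rw [mul_inv_cancel_left, hc, mul_smul_comm, mul_one] at this
      exact this
  { r := fun g => ι (e (g : G ⧸ center G)).out
    P0 := P0
    P1 := P1
    hP := fun g => hP _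
    hmul := by
      intro g h
      rw [← map_mul]
      apply key
      rw [QuotientGroup.mk_mul, QuotientGroup.out_eq', QuotientGroup.out_eq', QuotientGroup.out_eq',
        QuotientGroup.mk_mul, map_mul]
    hcen := by
      intro g
      rw [← hc, ← QuotientGroup.eq_one_iff, ← QuotientGroup.eq_one_iff (N := center S), QuotientGroup.out_eq']
      simp
    hsur := by
      intro M hM
      obtain ⟨s, rfl⟩ := hs M hM
      obtain ⟨g, hg⟩ := QuotientGroup.mk_surjective (e.symm (s : S ⧸ center S))
      refine ⟨g, key _ _ ?_⟩
      rw [QuotientGroup.out_eq', hg]; simp }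

end main

end Fmin

theorem psl_pgl_isFmin (G : Type*) [Group G] [Finite G] (p n : ℕ)
    (hp : p.Prime) (hn : 1 ≤ n) (hpn : 3 < p ^ n)
    (F : Type*) [Field F] [Fintype F] (hF : Nat.card F = p ^ n)
    (h : Nonempty ((G ⧸ center G) ≃* PSL2 F) ∨
         Nonempty ((G ⧸ center G) ≃* PGL2 F)) :
    IsFminGroup G := by
  rcases h with ⟨⟨e⟩⟩ | ⟨⟨e⟩⟩
  · let R : Fmin.Rep G F (fun d => d = 1) := Fmin.Rep.ofIso
      ({ toFun := fun s => s.1, map_one' := rfl, map_mul' := fun _ _ => rfl } :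
        Matrix.SpecialLinearGroup (Fin 2) F →* Matrix (Fin 2) (Fin 2) F)
      (by rintro d rfl; exact one_ne_zero) rfl (fun s => s.2)
      (by
        intro s
        rw [Matrix.SpecialLinearGroup.mem_center_iff]
        constructor
        · rintro ⟨c, -, h⟩
          exact ⟨c, by change s.1 = _; rw [← h, Matrix.scalar_apply, Matrix.smul_one_eq_diagonal]⟩
        · rintro ⟨c, h⟩
          change s.1 = _ at h
          refine ⟨c, ?_, by rw [h, Matrix.scalar_apply, Matrix.smul_one_eq_diagonal]⟩
          have := s.2
          rw [h] at this
          simpa using this)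
      (fun M hM => ⟨⟨M, hM⟩, rfl⟩) e
    refine R.isFmin hp hn hF fun _ => ?_
    by_cases hab : ∃ a b : F, a ≠ 0 ∧ b ≠ 0 ∧ a ^ 2 + b ^ 2 = 1
    · left
      obtain ⟨a, b, ha, hb, hab⟩ := hab
      intro M hM ht
      refine ⟨a, b, ha, hb, ?_⟩
      rw [Fmin.det_lin, hM, ht]
      linear_combination hab
    · right
      intro M hM ht a b h
      by_contra! hcon
      apply hab
      rw [Fmin.det_lin, hM, ht] at h
      exact ⟨a, b, hcon.1, hcon.2, by linear_combination h⟩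
  · let R : Fmin.Rep G F (fun d => d ≠ 0) := Fmin.Rep.ofIso
      (Units.coeHom (Matrix (Fin 2) (Fin 2) F) :
        Matrix.GeneralLinearGroup (Fin 2) F →* Matrix (Fin 2) (Fin 2) F)
      (fun d h => h) one_ne_zero
      (fun s => ((Matrix.isUnit_iff_isUnit_det _).1 s.isUnit).ne_zero)
      (by
        intro s
        rw [Matrix.GeneralLinearGroup.mem_center_iff_val_mem_range_scalar]
        constructor
        · rintro ⟨c, h⟩
          exact ⟨c, by change s.1 = _; rw [← h, Matrix.scalar_apply, Matrix.smul_one_eq_diagonal]⟩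
        · rintro ⟨c, h⟩
          change s.1 = _ at h
          exact ⟨c, by rw [h, Matrix.scalar_apply, Matrix.smul_one_eq_diagonal]⟩)
      (fun M hM => by
        have : IsUnit M := by rw [Matrix.isUnit_iff_isUnit_det]; exact hM.isUnit
        exact ⟨this.unit, rfl⟩) e
    refine R.isFmin hp hn hF fun _ => ?_
    left
    intro M hM ht
    open Polynomial in
    have hd : (X * (C M.det * X ^ 2 + 1) : F[X]).natDegree = 3 := by compute_degree!
    have hne : (Polynomial.X * (Polynomial.C M.det * Polynomial.X ^ 2 + 1) : Polynomial F) ≠ 0 := by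
      intro h0
      rw [h0] at hd
      simp at hd
    obtain ⟨b, hb⟩ := Polynomial.exists_eval_ne_zero_of_natDegree_lt_card _ hne
      (by rw [hd, Cardinal.mk_fintype, ← Nat.card_eq_fintype_card, hF]; exact_mod_cast hpn)
    simp only [Polynomial.eval_mul, Polynomial.eval_add, Polynomial.eval_pow, Polynomial.eval_X,
      Polynomial.eval_one, Polynomial.eval_C, mul_ne_zero_iff] at hb
    refine ⟨1, b, one_ne_zero, hb.1, ?_⟩
    rw [Fmin.det_lin, ht]
    intro h0
    apply hb.2
    linear_combination h0
end
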